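/- Let θ > 0 and, for each N ≥ 1, let α = α(N) > 0 be real and M = M(N) ≥ N an integer, with α(N)/N → α̂ ≥ 0 and M(N)/N → M̂ as N → ∞. Let y = y(N) be distributed as the β-Jacobi ensemble P_θ^{α,M,N}. Then for all positive integers k_1, k_2, lim_{N→∞} Cov( 𝔓_{k_1}(y), 𝔓_{k_2}(y) ) = θ^{−1} (2πi)^{−2} ∮∮ (v_2 − v_1)^{−2} ∏_{i=1}^2 ( (v_i/(v_i+1)) · ((v_i − α̂)/(v_i − α̂ − M̂)) )^{k_i} dv_1 dv_2, where the v_1- and v_2-contours are positively oriented circles centered at −1 of radii r_1 < r_2 with 0 < r_1 < r_2 < 1 + α̂ + M̂. -/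

import Mathlib

open MeasureTheory

/-- The (unnormalized) β-Jacobi density `∏_{i<j}|x_i−x_j|^{2θ} ∏_i x_i^{θα−1}(1−x_i)^{θ(M−N)+θ−1}`
with `β = 2θ`. -/
noncomputable def jacobiDensity (θ α : ℝ) (M N : ℕ) (x : Fin N → ℝ) : ℝ :=
  (∏ p ∈ Finset.univ.filter (fun p : Fin N × Fin N => p.1 < p.2),
      |x p.1 - x p.2| ^ (2 * θ)) *
    ∏ i : Fin N, (x i ^ (θ * α - 1) * (1 - x i) ^ (θ * ((M : ℝ) - (N : ℝ)) + θ - 1))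

/-- The unnormalized β-Jacobi measure on `[0,1]^N`. -/
noncomputable def jacobiMeasureRaw (θ α : ℝ) (M N : ℕ) : Measure (Fin N → ℝ) :=
  (volume.restrict (Set.univ.pi fun _ : Fin N => Set.Icc (0 : ℝ) 1)).withDensity
    fun x => ENNReal.ofReal (jacobiDensity θ α M N x)

/-- The β-Jacobi ensemble `P_θ^{α,M,N}`: the normalized β-Jacobi measure on `[0,1]^N`. -/
noncomputable def jacobiEnsemble (θ α : ℝ) (M N : ℕ) : Measure (Fin N → ℝ) :=
  (jacobiMeasureRaw θ α M N Set.univ)⁻¹ • jacobiMeasureRaw θ α M N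

/-!
Since the ensemble is stationary under the change of variables `x i ↦ x i + ε x i ^ (n+1) (1 - x i)`
to first order in `ε`, the power sums satisfy loop equations, also when tested against an arbitrary
polynomial observable. The leading coefficient of these equations grows like `θ (1 + a + m) N`,
where `α / N → a` and `M / N → m`, and this allows an induction on the degree: the centered power
sums have bounded fourth moments, the means divided by `N` converge to moments solving a quadratic
recursion, and the covariances converge to the solution of a linear recursion.

In the coordinate `t = (v + 1) / (v - a - m)` the function raised to powers in the contour integral
becomes the Laurent polynomial `f(t) = p t + x + q / t`, and the double integral becomes the residue
pairing `∑ i [t ^ i] f ^ l [t ^ (-i)] f ^ k` of the coefficients of its powers. This pairing solves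
the same linear recursion, because `f` is invariant under `t ↦ q / (p t)`.
-/

/-! ### Coefficients of the powers of `p t + x + q / t` -/

section Symbol

open PowerSeries Finset

section CommRing

variable {R : Type*} [CommRing R] (p x q : R)

/-- `stepCoeff p x q k j` is the coefficient of `t ^ j` in the Laurent polynomial
`(p t + x + q / t) ^ k`. -/
def stepCoeff : ℕ → ℤ → R
  | 0, j => if j = 0 then 1 else 0
  | k + 1, j => q * stepCoeff k (j + 1) + x * stepCoeff k j + p * stepCoeff k (j - 1)

/-- The Laurent polynomial `f(t) = p t + x + q / t`, multiplied by `t` so as to become a power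
series. -/
noncomputable def symbol : R⟦X⟧ := C q + C x * X + C p * X ^ 2

/-- The derivative `f'(t) = p - q / t ^ 2` of `f(t) = p t + x + q / t`, multiplied by `t ^ 2`. -/
noncomputable def symbolDeriv : R⟦X⟧ := C p * X ^ 2 - C q

/-- The part of `t (f ^ l)'` with nonnegative powers of `t`, where `f(t) = p t + x + q / t`. -/
noncomputable def positiveEulerPart (l : ℕ) : R⟦X⟧ := mk fun j => (j : R) * stepCoeff p x q l j

/-- The bilinear pairing `∑_{i > 0} i [t ^ i] f ^ l [t ^ (-i)] f ^ k` with
`f(t) = p t + x + q / t`. -/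
def residuePairing (k l : ℕ) : R :=
  ∑ i ∈ range (k + 1), (i : R) * stepCoeff p x q l i * stepCoeff p x q k (-(i : ℤ))

variable {p x q}

theorem stepCoeff_eq_zero {k : ℕ} {j : ℤ} (hj : (k : ℤ) < |j|) : stepCoeff p x q k j = 0 := by
  induction k generalizing j with
  | zero => simp_all [stepCoeff]
  | succ k ih =>
    have hup : (k : ℤ) < |j + 1| := by grind
    have hdown : (k : ℤ) < |j - 1| := by grind
    simp [stepCoeff, ih hup, ih hdown, ih (j := j) (by grind)]

theorem coeff_symbol_pow (k i : ℕ) :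
    coeff i (symbol p x q ^ k) = stepCoeff p x q k ((i : ℤ) - k) := by
  induction k generalizing i with
  | zero => simp [stepCoeff, coeff_one]
  | succ k ih =>
    have hsplit : symbol p x q ^ (k + 1) = C q * symbol p x q ^ k + C x * (X ^ 1 * symbol p x q ^ k)
        + C p * (X ^ 2 * symbol p x q ^ k) := by
      rw [pow_succ, symbol]; ring
    have hshift (s : ℕ) : coeff i (X ^ s * symbol p x q ^ k)
        = stepCoeff p x q k ((i : ℤ) - k - s) := by
      rw [coeff_X_pow_mul']
      split_ifs with hs
      · rw [ih]; congr 1; omega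
      · rw [stepCoeff_eq_zero (by grind)]
    rw [hsplit]
    rw [stepCoeff, show (i : ℤ) - (k + 1 : ℕ) + 1 = (i : ℤ) - k by push_cast; ring,
      show (i : ℤ) - (k + 1 : ℕ) = (i : ℤ) - k - (1 : ℕ) by push_cast; ring,
      show (i : ℤ) - k - (1 : ℕ) - 1 = (i : ℤ) - k - (2 : ℕ) by push_cast; ring]
    simp only [map_add, coeff_C_mul, hshift, ih]

variable (p x q) in
theorem coeff_positiveEulerPart_mul_symbol_pow (k l : ℕ) :
    coeff k (positiveEulerPart p x q l * symbol p x q ^ k) = residuePairing p x q k l := by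
  rw [coeff_mul, Nat.sum_antidiagonal_eq_sum_range_succ_mk, residuePairing]
  refine sum_congr rfl fun i hi => ?_
  have hik : i ≤ k := mem_range_succ_iff.mp hi
  simp only [positiveEulerPart, coeff_mk, coeff_symbol_pow]
  congr 2
  omega

theorem coeff_X_mul_derivative (f : R⟦X⟧) (n : ℕ) : coeff n (X * d⁄dX R f) = n * coeff n f := by
  rcases n with _ | n
  · simp
  · rw [coeff_succ_X_mul, coeff_derivative]; push_cast; ring

theorem X_mul_derivative_symbol :
    X * d⁄dX R (symbol p x q) = symbol p x q + symbolDeriv p q := by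
  ext n
  rw [coeff_X_mul_derivative]
  simp only [symbol, symbolDeriv, map_add, map_sub, coeff_C_mul, coeff_C, coeff_X, coeff_X_pow]
  rcases n with _ | _ | _ | n <;> simp
  ring

theorem coeff_symbol_pow_mul_symbolDeriv (k i : ℕ) :
    ((k : R) + 1) * coeff i (symbol p x q ^ k * symbolDeriv p q)
      = ((i : R) - (k + 1)) * stepCoeff p x q (k + 1) ((i : ℤ) - (k + 1)) := by
  have hEuler := coeff_X_mul_derivative (symbol p x q ^ (k + 1)) i
  have hpow : X * d⁄dX R (symbol p x q ^ (k + 1))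
      = C ((k : R) + 1) * (symbol p x q ^ (k + 1) + symbol p x q ^ k * symbolDeriv p q) := by
    rw [derivative_pow, Nat.add_sub_cancel]
    simp only [Nat.cast_add, Nat.cast_one, map_add, map_natCast, map_one]
    linear_combination ((k : R⟦X⟧) + 1) * symbol p x q ^ k * X_mul_derivative_symbol (p := p)
  rw [hpow, coeff_C_mul, map_add, coeff_symbol_pow] at hEuler
  push_cast at hEuler
  linear_combination hEuler

end CommRing

theorem map_stepCoeff {R S : Type*} [CommRing R] [CommRing S] (f : R →+* S) (p x q : R) (k : ℕ)
    (j : ℤ) : f (stepCoeff p x q k j) = stepCoeff (f p) (f x) (f q) k j := by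
  induction k generalizing j with
  | zero => simp [stepCoeff, apply_ite f]
  | succ k ih => simp [stepCoeff, ih]

theorem map_residuePairing {R S : Type*} [CommRing R] [CommRing S] (f : R →+* S) (p x q : R)
    (k l : ℕ) : f (residuePairing p x q k l) = residuePairing (f p) (f x) (f q) k l := by
  simp [residuePairing, map_stepCoeff]

theorem sum_range_sub_eq_two_mul {R : Type*} [CommRing R] {φ : ℤ → R} (heven : ∀ j, φ (-j) = φ j)
    (hzero : φ 0 = 0) {l n : ℕ} (hl : ∀ j : ℤ, (l : ℤ) < |j| → φ j = 0)
    (hn : ∀ j : ℤ, (n : ℤ) < |j| → φ j = 0) :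
    ∑ i ∈ range (l + (n + 1)), φ ((i : ℤ) - l) = 2 * ∑ i ∈ range (n + 1), φ i := by
  have hneg : ∑ i ∈ range l, φ ((i : ℤ) - l) = ∑ i ∈ range (l + 1), φ i := by
    rw [sum_range_succ' (fun i : ℕ => φ i) l, Nat.cast_zero, hzero, add_zero,
      ← sum_range_reflect]
    refine sum_congr rfl fun i hi => ?_
    have hil : i < l := mem_range.mp hi
    rw [← heven]
    congr 1
    omega
  have hext {b c : ℕ} (hb : ∀ j : ℤ, (b : ℤ) < |j| → φ j = 0) (hbc : b ≤ c) :
      ∑ i ∈ range (b + 1), φ i = ∑ i ∈ range (c + 1), φ i :=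
    sum_subset (range_mono (by omega)) fun i _ hi => hb i <| by
      rw [mem_range] at hi
      rw [Nat.abs_cast]
      omega
  have hsame : ∑ i ∈ range (l + 1), φ i = ∑ i ∈ range (n + 1), φ i :=
    (le_total l n).elim (hext hl) fun h => (hext hn h).symm
  rw [sum_range_add, hneg, hsame, two_mul]
  simp

section Field

variable {𝕜 : Type*} [Field 𝕜] {p x q : 𝕜}

/-- The Laurent polynomial `p t + x + q / t` is invariant under `t ↦ q / (p t)`. -/
theorem stepCoeff_neg (hp : p ≠ 0) (hq : q ≠ 0) (k : ℕ) (j : ℤ) :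
    stepCoeff p x q k (-j) = stepCoeff p x q k j * (q / p) ^ j := by
  induction k generalizing j with
  | zero => by_cases h : j = 0 <;> simp [stepCoeff, h]
  | succ k ih =>
    have hr : q / p ≠ 0 := div_ne_zero hq hp
    rw [stepCoeff, stepCoeff, show -j + 1 = -(j - 1) by ring, show -j - 1 = -(j + 1) by ring,
      ih, ih, ih, zpow_sub_one₀ hr, zpow_add_one₀ hr]
    field_simp
    ring

theorem coeff_succ_symbol_pow_mul_symbolDeriv [CharZero 𝕜] (k : ℕ) :
    coeff (k + 1) (symbol p x q ^ k * symbolDeriv p q) = 0 := by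
  have h := coeff_symbol_pow_mul_symbolDeriv (p := p) (x := x) (q := q) k (k + 1)
  push_cast at h
  rw [sub_self, zero_mul] at h
  exact (mul_eq_zero.mp h).resolve_left k.cast_add_one_ne_zero

theorem coeff_positiveEulerPart_mul_symbol_pow_mul_symbolDeriv (l n : ℕ) :
    (n + 1) * coeff (n + 1) (positiveEulerPart p x q l * (symbol p x q ^ n * symbolDeriv p q))
      = -∑ i ∈ range (n + 2),
          (i : 𝕜) ^ 2 * stepCoeff p x q l i * stepCoeff p x q (n + 1) (-(i : ℤ)) := by
  rw [coeff_mul, Nat.sum_antidiagonal_eq_sum_range_succ_mk, mul_sum, ← sum_neg_distrib]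
  refine sum_congr rfl fun i hi => ?_
  have hin : i ≤ n + 1 := mem_range_succ_iff.mp hi
  have h := coeff_symbol_pow_mul_symbolDeriv (p := p) (x := x) (q := q) n (n + 1 - i)
  rw [Nat.cast_sub hin, Nat.cast_sub hin,
    show ((n + 1 : ℕ) : ℤ) - (i : ℤ) - ((n : ℤ) + 1) = -(i : ℤ) by push_cast; ring] at h
  rw [positiveEulerPart, coeff_mk]
  push_cast at h ⊢
  linear_combination (i : 𝕜) * stepCoeff p x q l i * h

theorem coeff_symbol_pow_mul_symbolDeriv_sq (l n : ℕ) :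
    (n + 1) * ((l + 1) * coeff (n + l + 2) (symbol p x q ^ (n + l) * symbolDeriv p q ^ 2))
      = -∑ i ∈ range (l + 1 + (n + 2)), (((i : ℤ) - (l + 1 : ℕ) : ℤ) : 𝕜) ^ 2 *
          stepCoeff p x q (l + 1) ((i : ℤ) - (l + 1 : ℕ)) *
          stepCoeff p x q (n + 1) (-((i : ℤ) - (l + 1 : ℕ))) := by
  have hfactor : symbol p x q ^ (n + l) * symbolDeriv p q ^ 2
      = (symbol p x q ^ l * symbolDeriv p q) * (symbol p x q ^ n * symbolDeriv p q) := by ring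
  rw [hfactor, coeff_mul, Nat.sum_antidiagonal_eq_sum_range_succ_mk, mul_sum, mul_sum,
    ← sum_neg_distrib]
  refine sum_congr (by congr 1; omega) fun i hi => ?_
  have hi' : i ≤ n + l + 2 := by grind
  have hn := coeff_symbol_pow_mul_symbolDeriv (p := p) (x := x) (q := q) n (n + l + 2 - i)
  have hl := coeff_symbol_pow_mul_symbolDeriv (p := p) (x := x) (q := q) l i
  rw [Nat.cast_sub hi', Nat.cast_sub hi', show ((n + l + 2 : ℕ) : ℤ) - (i : ℤ) - ((n : ℤ) + 1)
    = -((i : ℤ) - ((l : ℤ) + 1)) by push_cast; ring] at hn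
  push_cast at hn hl ⊢
  linear_combination ((l + 1 : 𝕜) * coeff i (symbol p x q ^ l * symbolDeriv p q)) * hn
    + ((l : 𝕜) + 1 - i) * stepCoeff p x q (n + 1) (-((i : ℤ) - (l + 1))) * hl

/-- Both sides are sums of the even function
`j ↦ j ^ 2 [t ^ j] f ^ (l + 1) [t ^ (-j)] f ^ (n + 1)`, over the nonnegative integers and over all
integers respectively. -/
theorem two_mul_coeff_positiveEulerPart_mul_symbolDeriv [CharZero 𝕜] (hp : p ≠ 0) (hq : q ≠ 0)
    (l n : ℕ) :
    2 * coeff (n + 1) (positiveEulerPart p x q (l + 1) * (symbol p x q ^ n * symbolDeriv p q))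
      = (l + 1) * coeff (n + l + 2) (symbol p x q ^ (n + l) * symbolDeriv p q ^ 2) := by
  let φ : ℤ → 𝕜 := fun j => (j : 𝕜) ^ 2 * stepCoeff p x q (l + 1) j * stepCoeff p x q (n + 1) (-j)
  have heven (j : ℤ) : φ (-j) = φ j := by
    simp only [φ, neg_neg, stepCoeff_neg hp hq _ j]
    push_cast; ring
  have hsum := sum_range_sub_eq_two_mul (l := l + 1) (n := n + 1) heven (by simp [φ])
    (fun j hj => by simp [φ, stepCoeff_eq_zero hj])
    (fun j hj => by simp [φ, stepCoeff_eq_zero (k := n + 1) (j := -j) (by rwa [abs_neg])])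
  have hleft :=
    coeff_positiveEulerPart_mul_symbol_pow_mul_symbolDeriv (p := p) (x := x) (q := q) (l + 1) n
  have hright := coeff_symbol_pow_mul_symbolDeriv_sq (p := p) (x := x) (q := q) l n
  simp only [φ, Int.cast_natCast] at hsum
  rw [hsum] at hright
  have hn : (n : 𝕜) + 1 ≠ 0 := n.cast_add_one_ne_zero
  refine mul_left_cancel₀ hn ?_
  linear_combination 2 * hleft - hright

end Field

end Symbol

section LoopConvolution

open Finset

/-- The difference between the sum of `c` over `i + j = n` and its sum over `i + j = n + 1`, with
the two boundary terms `c 0 (n + 1)` and `c (n + 1) 0` removed from the latter. -/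
def loopConv {A : Type*} [AddCommGroup A] (n : ℕ) (c : ℕ → ℕ → A) : A :=
  ∑ ij ∈ antidiagonal n, c ij.1 ij.2 - ∑ i ∈ range n, c (i + 1) (n - i)

section AddCommGroup

variable {A : Type*} [AddCommGroup A] {n : ℕ}

theorem sum_antidiagonal_sub_sum_antidiagonal_succ (n : ℕ) (c : ℕ → ℕ → A) :
    ∑ ij ∈ antidiagonal n, c ij.1 ij.2 - ∑ ij ∈ antidiagonal (n + 1), c ij.1 ij.2
      = loopConv n c - c 0 (n + 1) - c (n + 1) 0 := by
  have hsucc : ∑ ij ∈ antidiagonal (n + 1), c ij.1 ij.2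
      = c 0 (n + 1) + (∑ i ∈ range n, c (i + 1) (n - i) + c (n + 1) 0) := by
    rw [Nat.sum_antidiagonal_eq_sum_range_succ c, sum_range_succ, sum_range_succ']
    simp only [Nat.add_sub_add_right, tsub_zero, tsub_self]
    abel
  rw [hsucc, loopConv]
  abel

theorem loopConv_add (c d : ℕ → ℕ → A) :
    loopConv n (fun i j => c i j + d i j) = loopConv n c + loopConv n d := by
  simp only [loopConv, sum_add_distrib]
  abel

theorem loopConv_swap (c : ℕ → ℕ → A) : loopConv n (fun i j => c j i) = loopConv n c := by
  have h := sum_antidiagonal_sub_sum_antidiagonal_succ n fun i j => c j i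
  have h' := sum_antidiagonal_sub_sum_antidiagonal_succ n c
  have hswap (k : ℕ) : ∑ ij ∈ antidiagonal k, c ij.2 ij.1 = ∑ ij ∈ antidiagonal k, c ij.1 ij.2 :=
    Nat.sum_antidiagonal_swap (f := fun ij => c ij.1 ij.2)
  rw [hswap, hswap, h', sub_right_comm] at h
  exact (sub_left_inj.mp (sub_left_inj.mp h)).symm

theorem map_loopConv {B : Type*} [AddCommGroup B] (L : A →+ B) (c : ℕ → ℕ → A) :
    L (loopConv n c) = loopConv n fun i j => L (c i j) := by
  simp only [loopConv, map_sub, map_sum]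

theorem tendsto_loopConv {ι : Type*} [TopologicalSpace A] [IsTopologicalAddGroup A]
    {F : Filter ι} {c : ℕ → ℕ → ι → A} {γ : ℕ → ℕ → A}
    (h : ∀ i ≤ n, ∀ j ≤ n, Filter.Tendsto (c i j) F (nhds (γ i j))) :
    Filter.Tendsto (fun s => loopConv n fun i j => c i j s) F (nhds (loopConv n γ)) := by
  refine (tendsto_finsetSum _ fun ij hij => ?_).sub (tendsto_finsetSum _ fun i hi => ?_)
  · exact h _ (HasAntidiagonal.antidiagonal.fst_le hij) _ (HasAntidiagonal.antidiagonal.snd_le hij)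
  · exact h _ (mem_range.mp hi) _ (n.sub_le i)

end AddCommGroup

theorem loopConv_mul_left {R : Type*} [Ring R] (n : ℕ) (r : R) (c : ℕ → ℕ → R) :
    loopConv n (fun i j => r * c i j) = r * loopConv n c :=
  (map_loopConv (AddMonoidHom.mulLeft r) c).symm

end LoopConvolution

/-! ### Limiting recursions -/

section JacobiRecursion

open PowerSeries Finset

/-- The coefficient of `t` in `f(t) = p t + x + q / t`, the function
`v / (v + 1) * (v - a) / (v - a - m)` in the coordinate `t = (v + 1) / (v - a - m)`. -/
noncomputable def upWeight (a m : ℝ) : ℝ := (a + m) * m / (1 + a + m) ^ 2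

/-- The coefficient of `1 / t` in `f(t) = p t + x + q / t`, the function
`v / (v + 1) * (v - a) / (v - a - m)` in the coordinate `t = (v + 1) / (v - a - m)`. -/
noncomputable def downWeight (a m : ℝ) : ℝ := (1 + a) / (1 + a + m) ^ 2

/-- The coefficient of `1` in `f(t) = p t + x + q / t`; it makes `f(1) = 1`. -/
noncomputable def stayWeight (a m : ℝ) : ℝ := 1 - upWeight a m - downWeight a m

/-- The limiting covariance of the `k`-th and `l`-th power sums, multiplied by `θ`. -/
noncomputable def limitCov (a m : ℝ) (k l : ℕ) : ℝ :=
  residuePairing (upWeight a m) (stayWeight a m) (downWeight a m) k l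

/-- The recursion for the limits `μ n` of the expectations of the power sums divided by `N`,
coming from the loop equations. -/
structure IsLimitMoments (a m : ℝ) (μ : ℕ → ℝ) : Prop where
  zero : μ 0 = 1
  succ (n : ℕ) : (1 + a + m) * μ (n + 1) = loopConv n (fun i j => μ i * μ j) + a * μ n

/-- The power series `f(t) t` of the limit shape, `f(t) = p t + x + q / t`. -/
noncomputable def jacobiSymbol (a m : ℝ) : ℝ⟦X⟧ :=
  symbol (upWeight a m) (stayWeight a m) (downWeight a m)

/-- The power series `f'(t) t ^ 2` of the limit shape, `f(t) = p t + x + q / t`. -/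
noncomputable def jacobiSymbolDeriv (a m : ℝ) : ℝ⟦X⟧ := symbolDeriv (upWeight a m) (downWeight a m)

/-- The moment generating function `∑ μ n z ^ n` in the coordinate `t` with `z = 1 / f(t)`, that is
`1 + (1 + a + m) t / (1 - t)`. -/
noncomputable def uniformizedMoments (a m : ℝ) : ℝ⟦X⟧ := 1 + C (1 + a + m) * X * PowerSeries.mk 1

variable {a m : ℝ}

theorem limitCov_zero_left (l : ℕ) : limitCov a m 0 l = 0 := by simp [limitCov, residuePairing]

theorem sq_mul_upWeight (hK : 1 + a + m ≠ 0) :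
    (1 + a + m) ^ 2 * upWeight a m = (a + m) * m := by
  rw [upWeight]; field_simp

theorem sq_mul_downWeight (hK : 1 + a + m ≠ 0) : (1 + a + m) ^ 2 * downWeight a m = 1 + a := by
  rw [downWeight]; field_simp

theorem mul_upWeight_sub_downWeight (hK : 1 + a + m ≠ 0) :
    (1 + a + m) * (upWeight a m - downWeight a m) = m - 1 := by
  refine mul_left_cancel₀ hK ?_
  linear_combination sq_mul_upWeight hK - sq_mul_downWeight hK

theorem X_sub_jacobiSymbol :
    X - jacobiSymbol a m = -((1 - X) * (C (downWeight a m) - C (upWeight a m) * X)) := by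
  simp only [jacobiSymbol, symbol, stayWeight, map_sub, map_one]
  ring

theorem uniformizedMoments_mul_one_sub_X :
    uniformizedMoments a m * (1 - X) = 1 + C (a + m) * X := by
  have h := mk_one_mul_one_sub_eq_one ℝ
  simp only [uniformizedMoments, map_add, map_one]
  linear_combination (1 + C a + C m) * X * h

theorem uniformizedMoments_mul_X_sub_jacobiSymbol :
    uniformizedMoments a m * (X - jacobiSymbol a m)
      = -(1 + C (a + m) * X) * (C (downWeight a m) - C (upWeight a m) * X) := by
  rw [X_sub_jacobiSymbol, ← uniformizedMoments_mul_one_sub_X]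
  ring

/-- The left side is a square root of the discriminant of `uniformizedMoments_quadratic`. -/
theorem two_mul_uniformizedMoments_mul_X_sub_jacobiSymbol_add (hK : 1 + a + m ≠ 0) :
    2 * (uniformizedMoments a m * (X - jacobiSymbol a m)) + C a * X
        - C (a + m - 1) * jacobiSymbol a m
      = C (1 + a + m) * jacobiSymbolDeriv a m := by
  have h := congrArg (C (R := ℝ)) (mul_upWeight_sub_downWeight hK)
  simp only [map_mul, map_sub, map_add, map_one] at h
  rw [uniformizedMoments_mul_X_sub_jacobiSymbol]
  simp only [jacobiSymbol, jacobiSymbolDeriv, symbol, symbolDeriv, stayWeight, map_sub, map_add,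
    map_one]
  linear_combination X * h

theorem uniformizedMoments_quadratic (hK : 1 + a + m ≠ 0) :
    (X - jacobiSymbol a m) * uniformizedMoments a m ^ 2
        + (C a * X - C (a + m - 1) * jacobiSymbol a m) * uniformizedMoments a m
        + C (a + m) * jacobiSymbol a m = 0 := by
  have hup := congrArg (C (R := ℝ)) (sq_mul_upWeight hK)
  have hdown := congrArg (C (R := ℝ)) (sq_mul_downWeight hK)
  simp only [map_mul, map_pow, map_add, map_one] at hup hdown
  have hX : (1 - X : ℝ⟦X⟧) ≠ 0 := fun h => by simpa using congrArg constantCoeff h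
  refine (mul_eq_zero_iff_right hX).mp ?_
  have hsplit (u g : ℝ⟦X⟧) :
      ((X - g) * u ^ 2 + (C a * X - C (a + m - 1) * g) * u + C (a + m) * g) * (1 - X)
        = (u * (X - g) + (C a * X - C (a + m - 1) * g)) * (u * (1 - X))
          + C (a + m) * g * (1 - X) := by ring
  rw [hsplit, uniformizedMoments_mul_one_sub_X, uniformizedMoments_mul_X_sub_jacobiSymbol]
  simp only [jacobiSymbol, symbol, stayWeight, map_sub, map_add, map_one]
  linear_combination X ^ 2 * hup - X * hdown

theorem mk_eq_sum_antidiagonal_add_X_pow_mul {R : Type*} [CommSemiring R] (c : ℕ → R) (n : ℕ) :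
    PowerSeries.mk c = ∑ ij ∈ antidiagonal n, C (c ij.1) * X ^ ij.1
      + X ^ (n + 1) * PowerSeries.mk fun i => c (i + (n + 1)) := by
  ext j
  rw [Nat.sum_antidiagonal_eq_sum_range_succ_mk, map_add, map_sum, coeff_X_pow_mul']
  simp only [coeff_mk, coeff_C_mul, coeff_X_pow, mul_ite, mul_one, mul_zero, sum_ite_eq, mem_range]
  by_cases hj : n + 1 ≤ j
  · rw [if_neg (by omega), if_pos hj, zero_add, Nat.sub_add_cancel hj]
  · rw [if_pos (by omega), if_neg hj, add_zero]

namespace IsLimitMoments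

variable {μ : ℕ → ℝ}

theorem quadratic_mk (h : IsLimitMoments a m μ) :
    (X - 1) * PowerSeries.mk μ ^ 2 + (C a * X - C (a + m - 1)) * PowerSeries.mk μ + C (a + m)
      = 0 := by
  have hsplit (V : ℝ⟦X⟧) : (X - 1) * V ^ 2 + (C a * X - C (a + m - 1)) * V + C (a + m)
      = X * (V * V) - V * V + C a * (X * V) - C (a + m - 1) * V + C (a + m) := by
    ring
  ext n
  rw [hsplit]
  rcases n with _ | n
  · simp [h.zero]
    ring
  · have hconv := sum_antidiagonal_sub_sum_antidiagonal_succ n fun i j => μ i * μ j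
    rw [map_add, map_sub, map_add, map_sub, coeff_succ_X_mul, coeff_C_mul, coeff_C_mul,
      coeff_succ_X_mul, coeff_mul, coeff_mul, coeff_C, if_neg n.succ_ne_zero, map_zero]
    simp only [coeff_mk]
    linear_combination hconv - h.succ n - 2 * μ (n + 1) * h.zero

/-- Substituting `z = 1 / f(t)` into `∑ μ n z ^ n` gives `uniformizedMoments`, since both solve the
same quadratic equation and have constant coefficient `1`. -/
theorem substAlgHom_mk (h : IsLimitMoments a m μ) (hK : 1 + a + m ≠ 0)
    (hq : downWeight a m ≠ 0) (hs : HasSubst (X * (jacobiSymbol a m)⁻¹)) :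
    substAlgHom hs (PowerSeries.mk μ) = uniformizedMoments a m := by
  set g := jacobiSymbol a m with hg
  set W := substAlgHom hs (PowerSeries.mk μ) with hW
  set u := uniformizedMoments a m with hu
  have hginv : g * g⁻¹ = 1 := PowerSeries.mul_inv_cancel _ (by simpa [hg, jacobiSymbol, symbol])
  have hC (r : ℝ) : substAlgHom hs (C r) = C r := (substAlgHom hs).commutes r
  have hWquad : (X * g⁻¹ - 1) * W ^ 2 + (C a * (X * g⁻¹) - C (a + m - 1)) * W + C (a + m) = 0 := by
    simpa only [map_add, map_sub, map_mul, map_pow, map_one, map_zero, hC, substAlgHom_X hs]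
      using congrArg (substAlgHom hs) h.quadratic_mk
  have hprod : (W - u) * ((X * g⁻¹ - 1) * (W + u) + (C a * (X * g⁻¹) - C (a + m - 1))) = 0 := by
    linear_combination hWquad - g⁻¹ * uniformizedMoments_quadratic hK
      + (-(u ^ 2) - C (a + m - 1) * u + C (a + m)) * hginv
  have hW₀ : constantCoeff W = 1 := by
    have hV := congrArg (substAlgHom hs) (eq_X_mul_shift_add_const (PowerSeries.mk μ))
    rw [map_add, map_mul, substAlgHom_X hs, hC] at hV
    rw [hW, hV]
    simp [h.zero]
  have hu₀ : constantCoeff u = 1 := by simp [hu, uniformizedMoments]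
  refine sub_eq_zero.mp ((mul_eq_zero.mp hprod).resolve_right fun hzero => hK ?_)
  have := congrArg constantCoeff hzero
  simp [hW₀, hu₀] at this
  linarith

theorem exists_jacobiSymbol_pow_mul_uniformizedMoments (h : IsLimitMoments a m μ)
    (hK : 1 + a + m ≠ 0) (hq : downWeight a m ≠ 0) (n : ℕ) :
    ∃ r : ℝ⟦X⟧, jacobiSymbol a m ^ n * uniformizedMoments a m
        = ∑ ij ∈ antidiagonal n, C (μ ij.1) * X ^ ij.1 * jacobiSymbol a m ^ ij.2
          + X ^ (n + 1) * r
      ∧ downWeight a m * constantCoeff r = μ (n + 1) := by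
  set g := jacobiSymbol a m with hg
  have hg₀ : constantCoeff g = downWeight a m := by simp [hg, jacobiSymbol, symbol]
  have hginv : g * g⁻¹ = 1 := PowerSeries.mul_inv_cancel _ (by rwa [hg₀])
  have hs : HasSubst (X * g⁻¹) := HasSubst.of_constantCoeff_zero' (by simp)
  have hC (r : ℝ) : substAlgHom hs (C r) = C r := (substAlgHom hs).commutes r
  set s := substAlgHom hs (PowerSeries.mk fun i => μ (i + (n + 1))) with hs_def
  have hsplit : uniformizedMoments a m
      = ∑ ij ∈ antidiagonal n, C (μ ij.1) * (X * g⁻¹) ^ ij.1 + (X * g⁻¹) ^ (n + 1) * s := by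
    rw [← h.substAlgHom_mk hK hq hs, mk_eq_sum_antidiagonal_add_X_pow_mul μ n]
    simp only [map_add, map_mul, map_pow, map_sum, hC, substAlgHom_X hs, ← hs_def]
  have hs₀ : constantCoeff s = μ (n + 1) := by
    have hV := congrArg (substAlgHom hs)
      (eq_X_mul_shift_add_const (PowerSeries.mk fun i => μ (i + (n + 1))))
    rw [map_add, map_mul, substAlgHom_X hs, hC] at hV
    rw [hs_def, hV]
    simp
  refine ⟨g⁻¹ * s, ?_, ?_⟩
  · rw [hsplit, mul_add, mul_sum]
    congr 1
    · refine sum_congr rfl fun ij hij => ?_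
      rw [← mem_antidiagonal.mp hij, pow_add, mul_pow]
      have := congrArg (· ^ ij.1) hginv
      simp only [mul_pow, one_pow] at this
      linear_combination g ^ ij.2 * C (μ ij.1) * X ^ ij.1 * this
    · have := congrArg (· ^ n) hginv
      simp only [mul_pow, one_pow] at this
      rw [mul_pow, pow_succ g⁻¹]
      linear_combination X ^ (n + 1) * g⁻¹ * s * this
  · have hinv₀ := congrArg constantCoeff hginv
    rw [map_mul, hg₀, map_one] at hinv₀
    rw [map_mul, ← mul_assoc, hinv₀, one_mul, hs₀]

theorem sum_antidiagonal_mul_coeff (h : IsLimitMoments a m μ) (hK : 1 + a + m ≠ 0)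
    (hq : downWeight a m ≠ 0) (d : ℝ⟦X⟧) (n : ℕ) :
    ∑ ij ∈ antidiagonal n, μ ij.1 * coeff ij.2 (d * jacobiSymbol a m ^ ij.2)
      = coeff n (d * (jacobiSymbol a m ^ n * uniformizedMoments a m)) := by
  obtain ⟨r, hr, -⟩ := h.exists_jacobiSymbol_pow_mul_uniformizedMoments hK hq n
  have hrest : d * (X ^ (n + 1) * r) = X ^ (n + 1) * (d * r) := by ring
  rw [hr, mul_add, map_add, hrest, coeff_X_pow_mul', if_neg (by omega), add_zero, mul_sum, map_sum]
  refine sum_congr rfl fun ij hij => ?_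
  have hterm : d * (C (μ ij.1) * X ^ ij.1 * jacobiSymbol a m ^ ij.2)
      = C (μ ij.1) * (X ^ ij.1 * (d * jacobiSymbol a m ^ ij.2)) := by ring
  obtain ⟨i, j⟩ := ij
  obtain rfl := mem_antidiagonal.mp hij
  rw [hterm, coeff_C_mul, coeff_X_pow_mul', if_pos (by simp), Nat.add_sub_cancel_left]

theorem succ_eq_neg_coeff (h : IsLimitMoments a m μ) (hK : 1 + a + m ≠ 0)
    (hq : downWeight a m ≠ 0) (n : ℕ) :
    μ (n + 1) = -coeff (n + 1)
      (uniformizedMoments a m * (jacobiSymbol a m ^ n * jacobiSymbolDeriv a m)) := by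
  obtain ⟨r, hr, hr₀⟩ := h.exists_jacobiSymbol_pow_mul_uniformizedMoments hK hq n
  have hsplit : uniformizedMoments a m * (jacobiSymbol a m ^ n * jacobiSymbolDeriv a m)
      = ∑ ij ∈ antidiagonal n, C (μ ij.1) *
          (X ^ ij.1 * (jacobiSymbol a m ^ ij.2 * jacobiSymbolDeriv a m))
        + X ^ (n + 1) * (r * jacobiSymbolDeriv a m) := by
    rw [← mul_assoc, mul_comm (uniformizedMoments a m), hr, add_mul, sum_mul]
    simp only [mul_assoc]
  have hsum : ∑ ij ∈ antidiagonal n, coeff (n + 1) (C (μ ij.1) *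
      (X ^ ij.1 * (jacobiSymbol a m ^ ij.2 * jacobiSymbolDeriv a m))) = 0 := by
    refine sum_eq_zero fun ij hij => ?_
    have hn : n + 1 - ij.1 = ij.2 + 1 := by have := mem_antidiagonal.mp hij; omega
    rw [coeff_C_mul, coeff_X_pow_mul', if_pos (by omega), hn, jacobiSymbol, jacobiSymbolDeriv,
      coeff_succ_symbol_pow_mul_symbolDeriv, mul_zero]
  have hderiv₀ : constantCoeff (jacobiSymbolDeriv a m) = -downWeight a m := by
    simp [jacobiSymbolDeriv, symbolDeriv]
  rw [hsplit, map_add, map_sum, hsum, zero_add, coeff_X_pow_mul', if_pos le_rfl, Nat.sub_self,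
    coeff_zero_eq_constantCoeff_apply, map_mul, hderiv₀]
  linear_combination -hr₀

theorem sub_eq_coeff_sq (h : IsLimitMoments a m μ) (hK : 1 + a + m ≠ 0)
    (hq : downWeight a m ≠ 0) (n : ℕ) :
    2 * (μ (n + 2) - μ (n + 1))
      = (1 + a + m) * coeff (n + 2) (jacobiSymbol a m ^ n * jacobiSymbolDeriv a m ^ 2) := by
  set g := jacobiSymbol a m
  set δ := jacobiSymbolDeriv a m
  set u := uniformizedMoments a m
  have hsucc := h.succ_eq_neg_coeff hK hq n
  have hvanish : coeff (n + 1) (g ^ n * δ) = 0 := coeff_succ_symbol_pow_mul_symbolDeriv n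
  have hvanish' : coeff (n + 2) (g ^ (n + 1) * δ) = 0 :=
    coeff_succ_symbol_pow_mul_symbolDeriv (n + 1)
  rw [← coeff_succ_X_mul] at hsucc hvanish
  have hbracket : C (2 : ℝ) * (X * (u * (g ^ n * δ)) - u * (g ^ (n + 1) * δ))
      = C (1 + a + m) * (g ^ n * δ ^ 2) - C a * (X * (g ^ n * δ))
        + C (a + m - 1) * (g ^ (n + 1) * δ) := by
    rw [map_ofNat C 2]
    linear_combination g ^ n * δ * two_mul_uniformizedMoments_mul_X_sub_jacobiSymbol_add hK
  have hcoeff := congrArg (coeff (n + 2)) hbracket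
  rw [coeff_C_mul, map_sub, map_add, map_sub, coeff_C_mul, coeff_C_mul, coeff_C_mul, hvanish,
    hvanish'] at hcoeff
  linear_combination hcoeff + 2 * (h.succ_eq_neg_coeff hK hq (n + 1) - hsucc)

end IsLimitMoments

theorem upWeight_pos (ha : 0 ≤ a) (hm : 0 < m) : 0 < upWeight a m := by
  rw [upWeight]; positivity

theorem downWeight_pos (ha : 0 ≤ a) (hm : 0 < m) : 0 < downWeight a m := by
  rw [downWeight]; positivity

theorem IsLimitMoments.limitCov_succ {μ : ℕ → ℝ} (h : IsLimitMoments a m μ) (ha : 0 ≤ a)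
    (hm : 0 < m) (l n : ℕ) :
    (1 + a + m) * limitCov a m (n + 1) (l + 1)
      = 2 * loopConv n (fun i j => μ i * limitCov a m j (l + 1))
        + a * limitCov a m n (l + 1) + (l + 1) * (μ (n + l + 1) - μ (n + l + 2)) := by
  have hK : 1 + a + m ≠ 0 := by positivity
  have hp := (upWeight_pos ha hm).ne'
  have hq := (downWeight_pos ha hm).ne'
  set g := jacobiSymbol a m
  set δ := jacobiSymbolDeriv a m
  set u := uniformizedMoments a m
  set d := positiveEulerPart (upWeight a m) (stayWeight a m) (downWeight a m) (l + 1)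
  have hcov (k : ℕ) : coeff k (d * g ^ k) = limitCov a m k (l + 1) :=
    coeff_positiveEulerPart_mul_symbol_pow _ _ _ k (l + 1)
  have hconv := sum_antidiagonal_sub_sum_antidiagonal_succ n
    fun i j => μ i * limitCov a m j (l + 1)
  have hsum (k : ℕ) : ∑ ij ∈ antidiagonal k, μ ij.1 * limitCov a m ij.2 (l + 1)
      = coeff k (d * (g ^ k * u)) := by
    simp only [← hcov]
    exact h.sum_antidiagonal_mul_coeff hK hq d k
  rw [hsum, hsum, limitCov_zero_left, h.zero] at hconv
  have hsymm : 2 * coeff (n + 1) (d * (g ^ n * δ))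
      = (l + 1) * coeff (n + l + 2) (g ^ (n + l) * δ ^ 2) :=
    two_mul_coeff_positiveEulerPart_mul_symbolDeriv hp hq l n
  have hbracket : C (2 : ℝ) * (X * (d * (g ^ n * u)) - d * (g ^ (n + 1) * u))
      + C a * (X * (d * g ^ n)) - C (a + m - 1) * (d * g ^ (n + 1))
      = C (1 + a + m) * (d * (g ^ n * δ)) := by
    rw [map_ofNat C 2]
    linear_combination d * g ^ n * two_mul_uniformizedMoments_mul_X_sub_jacobiSymbol_add hK
  have hcoeff := congrArg (coeff (n + 1)) hbracket
  rw [map_sub, map_add, coeff_C_mul, coeff_C_mul, coeff_C_mul, coeff_C_mul, map_sub,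
    coeff_succ_X_mul, coeff_succ_X_mul, hcov, hcov] at hcoeff
  linear_combination 2 * hconv - hcoeff - (1 + a + m) / 2 * hsymm
    + (l + 1) / 2 * h.sub_eq_coeff_sq hK hq (n + l)

end JacobiRecursion

/-! ### The double contour integral -/

section Contour

open Complex Finset Metric

theorem sum_stepCoeff_mul_zpow {F : Type*} [Field F] (p x q : F) {t : F} (ht : t ≠ 0) (k : ℕ)
    {s : Finset ℤ} (hs : Finset.Icc (-k : ℤ) k ⊆ s) :
    ∑ j ∈ s, stepCoeff p x q k j * t ^ j = (p * t + x + q * t⁻¹) ^ k := by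
  induction k generalizing s with
  | zero =>
    have hmem : (0 : ℤ) ∈ s := hs (by simp)
    simp [stepCoeff, hmem]
  | succ k ih =>
    have hshift (c : ℤ) (hc : |c| ≤ 1) : ∑ j ∈ s, stepCoeff p x q k (j + c) * t ^ (j + c)
        = (p * t + x + q * t⁻¹) ^ k := by
      rw [← ih (s := s.map (addRightEmbedding c)), sum_map]
      · rfl
      · intro j hj
        refine mem_map.mpr ⟨j - c, hs ?_, sub_add_cancel j c⟩
        have := abs_le.mp hc
        simp only [Finset.mem_Icc] at hj ⊢
        push_cast
        omega
    have hdown := hshift 1 (by simp)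
    have hstay := hshift 0 (by simp)
    have hup := hshift (-1) (by simp)
    have hterm (j : ℤ) : stepCoeff p x q (k + 1) j * t ^ j
        = q * t⁻¹ * (stepCoeff p x q k (j + 1) * t ^ (j + 1))
          + x * (stepCoeff p x q k (j + 0) * t ^ (j + 0))
          + p * t * (stepCoeff p x q k (j + -1) * t ^ (j + -1)) := by
      simp only [stepCoeff, zpow_add₀ ht, add_zero, ← sub_eq_add_neg, zpow_sub₀ ht, zpow_one]
      field_simp
    simp only [hterm, sum_add_distrib, ← mul_sum]
    rw [hdown, hstay, hup, pow_succ]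
    ring

/-- The Möbius coordinate `t(v) = (v + 1) / (v + 1 - K)` in which the integrand of the contour
formula becomes a Laurent polynomial. -/
noncomputable def mobiusCoord (K : ℝ) (v : ℂ) : ℂ := (v + 1) / (v + 1 - K)

/-- The derivative of `mobiusCoord K`. -/
noncomputable def mobiusCoordDeriv (K : ℝ) (v : ℂ) : ℂ := -K / (v + 1 - K) ^ 2

variable {K r r₁ r₂ : ℝ} {v w : ℂ}

theorem add_one_ne_zero_of_mem_sphere (hr : 0 < r) (hv : v ∈ sphere (-1 : ℂ) r) : v + 1 ≠ 0 := by
  have hnorm : ‖v + 1‖ = r := by simpa [dist_eq_norm] using hv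
  rintro h
  rw [h, norm_zero] at hnorm
  exact hr.ne hnorm

theorem add_one_sub_ne_zero_of_mem_closedBall (hrK : r < K) (hv : v ∈ closedBall (-1 : ℂ) r) :
    v + 1 - K ≠ 0 := by
  have hnorm : ‖v + 1‖ ≤ r := by simpa [dist_eq_norm] using hv
  intro h
  rw [sub_eq_zero.mp h, norm_real, Real.norm_eq_abs] at hnorm
  linarith [le_abs_self K]

theorem mobiusCoord_ne_zero (hr : 0 < r) (hrK : r < K) (hv : v ∈ sphere (-1 : ℂ) r) :
    mobiusCoord K v ≠ 0 :=
  div_ne_zero (add_one_ne_zero_of_mem_sphere hr hv)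
    (add_one_sub_ne_zero_of_mem_closedBall hrK (sphere_subset_closedBall hv))

theorem hasDerivAt_mobiusCoord (h : v + 1 - K ≠ 0) :
    HasDerivAt (mobiusCoord K) (mobiusCoordDeriv K v) v := by
  have hnum : HasDerivAt (fun v : ℂ => v + 1) 1 v := (hasDerivAt_id v).add_const 1
  exact (hnum.div (hnum.sub_const _) h).congr_deriv (by rw [mobiusCoordDeriv]; congr 1; ring)

theorem continuousOn_mobiusCoord (hrK : r < K) :
    ContinuousOn (mobiusCoord K) (closedBall (-1) r) := fun _ hv =>
  (hasDerivAt_mobiusCoord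
    (add_one_sub_ne_zero_of_mem_closedBall hrK hv)).continuousAt.continuousWithinAt

theorem continuousOn_mobiusCoord_zpow (hr : 0 < r) (hrK : r < K) (j : ℤ) :
    ContinuousOn (fun v => mobiusCoord K v ^ j) (sphere (-1) r) :=
  ((continuousOn_mobiusCoord hrK).mono sphere_subset_closedBall).zpow₀ j fun _ hv =>
    Or.inl (mobiusCoord_ne_zero hr hrK hv)

theorem continuousOn_mobiusCoordDeriv (hrK : r < K) :
    ContinuousOn (mobiusCoordDeriv K) (closedBall (-1) r) :=
  ContinuousOn.div (by fun_prop) (by fun_prop) fun _ hv =>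
    pow_ne_zero _ (add_one_sub_ne_zero_of_mem_closedBall hrK hv)

theorem circleIntegral_eq_zero_of_differentiableAt {c : ℂ} (hr : 0 ≤ r) {F : ℂ → ℂ}
    (h : ∀ z ∈ closedBall c r, DifferentiableAt ℂ F z) : ∮ z in C(c, r), F z = 0 :=
  circleIntegral_eq_zero_of_differentiable_on_off_countable hr Set.countable_empty
    (fun z hz => (h z hz).continuousAt.continuousWithinAt)
    (fun z hz => h z (ball_subset_closedBall hz.1))

theorem circleIntegral_mobiusCoordDeriv_mul_inv (hr : 0 < r) (hrK : r < K) :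
    ∮ v in C(-1, r), mobiusCoordDeriv K v * mobiusCoord K v ^ (-1 : ℤ) = 2 * Real.pi * I := by
  have hpole : ∀ v ∈ closedBall (-1 : ℂ) r, v + 1 - K ≠ 0 := fun v =>
    add_one_sub_ne_zero_of_mem_closedBall hrK
  have hcenter : ∀ v ∈ sphere (-1 : ℂ) r, v - -1 ≠ 0 := fun v hv => by
    rw [sub_neg_eq_add]; exact add_one_ne_zero_of_mem_sphere hr hv
  have hsplit : ∮ v in C(-1, r), mobiusCoordDeriv K v * mobiusCoord K v ^ (-1 : ℤ)
      = ∮ v in C(-1, r), ((v - -1)⁻¹ - (v + 1 - K)⁻¹) := by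
    refine circleIntegral.integral_congr hr.le fun v hv => ?_
    have h₁ := add_one_ne_zero_of_mem_sphere hr hv
    have h₂ := hpole v (sphere_subset_closedBall hv)
    simp only [mobiusCoordDeriv, mobiusCoord, zpow_neg_one, sub_neg_eq_add]
    field_simp
    ring
  have hregular : ∮ v in C(-1, r), (v + 1 - K)⁻¹ = 0 :=
    circleIntegral_eq_zero_of_differentiableAt hr.le fun v hv => by
      have := hpole v hv
      fun_prop (disch := assumption)
  rw [hsplit, circleIntegral.integral_sub, circleIntegral.integral_sub_center_inv _ hr.ne',
    hregular, sub_zero]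
  · exact (ContinuousOn.inv₀ (by fun_prop) hcenter).circleIntegrable hr.le
  · exact (ContinuousOn.inv₀ (by fun_prop) fun v hv =>
      hpole v (sphere_subset_closedBall hv)).circleIntegrable hr.le

theorem circleIntegral_mobiusCoordDeriv_mul_zpow (hr : 0 < r) (hrK : r < K) (j : ℤ) :
    ∮ v in C(-1, r), mobiusCoordDeriv K v * mobiusCoord K v ^ j
      = if j = -1 then 2 * Real.pi * I else 0 := by
  split_ifs with hj
  · rw [hj, circleIntegral_mobiusCoordDeriv_mul_inv hr hrK]
  · have hj' : (j : ℂ) + 1 ≠ 0 := by exact_mod_cast fun h : j + 1 = 0 => hj (by omega)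
    refine circleIntegral.integral_eq_zero_of_hasDerivWithinAt
      (f := fun v => mobiusCoord K v ^ (j + 1) / ((j : ℂ) + 1)) hr.le fun v hv => ?_
    have hpow := (hasDerivAt_zpow (j + 1) _ (Or.inl (mobiusCoord_ne_zero hr hrK hv))).comp v
      (hasDerivAt_mobiusCoord
        (add_one_sub_ne_zero_of_mem_closedBall hrK (sphere_subset_closedBall hv)))
    refine ((hpow.div_const ((j : ℂ) + 1)).congr_deriv ?_).hasDerivWithinAt
    push_cast
    rw [add_sub_cancel_right]
    field_simp

/-- The Cauchy kernel of the coordinate `mobiusCoord K`, namely `t'(v) / (t(w) - t(v))`. -/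
noncomputable def mobiusKernel (K : ℝ) (w v : ℂ) : ℂ := (w + 1 - K) / ((v + 1 - K) * (w - v))

theorem mobiusKernel_mul_sub (hw : w + 1 - K ≠ 0) (hv : v + 1 - K ≠ 0) (hwv : w - v ≠ 0) :
    mobiusKernel K w v * (mobiusCoord K w - mobiusCoord K v) = mobiusCoordDeriv K v := by
  simp only [mobiusKernel, mobiusCoord, mobiusCoordDeriv]; field_simp; ring

theorem inv_sq_mul_mobiusCoord_sub (hw : w + 1 - K ≠ 0) (hv : v + 1 - K ≠ 0) (hwv : w - v ≠ 0) :
    ((w - v) ^ 2)⁻¹ * (mobiusCoord K w - mobiusCoord K v)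
      = mobiusCoordDeriv K w * mobiusKernel K w v := by
  simp only [mobiusKernel, mobiusCoord, mobiusCoordDeriv]; field_simp; ring

theorem sub_ne_zero_of_mem_sphere_of_mem_closedBall {c : ℂ} (h12 : r₁ < r₂)
    (hw : w ∈ sphere c r₂) (hv : v ∈ closedBall c r₁) : w - v ≠ 0 := by
  intro h
  rw [← sub_eq_zero.mp h, mem_closedBall, mem_sphere.mp hw] at hv
  exact hv.not_gt h12

theorem mobiusCoord_mul_circleIntegral (hr : 0 < r) (hrK : r < K) {g h : ℂ → ℂ}
    (hg : ContinuousOn g (sphere (-1) r))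
    (hgh : ∀ v ∈ sphere (-1 : ℂ) r, g v * (mobiusCoord K w - mobiusCoord K v) = h v) (j : ℤ) :
    mobiusCoord K w * ∮ v in C(-1, r), g v * mobiusCoord K v ^ j
      = (∮ v in C(-1, r), h v * mobiusCoord K v ^ j)
        + ∮ v in C(-1, r), g v * mobiusCoord K v ^ (j + 1) := by
  have hcont (i : ℤ) : ContinuousOn (fun v => g v * mobiusCoord K v ^ i) (sphere (-1) r) :=
    hg.mul (continuousOn_mobiusCoord_zpow hr hrK i)
  rw [← circleIntegral.integral_const_mul, ← sub_eq_iff_eq_add, ← circleIntegral.integral_sub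
    (((hcont j).const_mul _).circleIntegrable hr.le) ((hcont (j + 1)).circleIntegrable hr.le)]
  refine circleIntegral.integral_congr hr.le fun v hv => ?_
  simp only [← hgh v hv, zpow_add_one₀ (mobiusCoord_ne_zero hr hrK hv)]
  ring

theorem circleIntegral_mul_mobiusCoord_pow_eq_zero (hr : 0 ≤ r) (hrK : r < K) {g : ℂ → ℂ}
    (hg : ∀ v ∈ closedBall (-1 : ℂ) r, DifferentiableAt ℂ g v) (n : ℕ) :
    ∮ v in C(-1, r), g v * mobiusCoord K v ^ (n : ℤ) = 0 :=
  circleIntegral_eq_zero_of_differentiableAt hr fun v hv => by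
    have hderiv := hasDerivAt_mobiusCoord (add_one_sub_ne_zero_of_mem_closedBall hrK hv)
    simp only [zpow_natCast]
    exact (hg v hv).mul (hderiv.differentiableAt.pow n)

theorem circleIntegral_mobiusKernel_mul_zpow (hr : 0 < r₁) (h12 : r₁ < r₂) (hrK : r₂ < K)
    (hw : w ∈ sphere (-1 : ℂ) r₂) (n : ℕ) :
    ∮ v in C(-1, r₁), mobiusKernel K w v * mobiusCoord K v ^ (-(n : ℤ))
      = if n = 0 then 0 else 2 * Real.pi * I * mobiusCoord K w ^ (-(n : ℤ)) := by
  have h1K := h12.trans hrK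
  have hwK := add_one_sub_ne_zero_of_mem_closedBall hrK (sphere_subset_closedBall hw)
  have hvK : ∀ v ∈ closedBall (-1 : ℂ) r₁, v + 1 - K ≠ 0 := fun v =>
    add_one_sub_ne_zero_of_mem_closedBall h1K
  have hwv : ∀ v ∈ closedBall (-1 : ℂ) r₁, w - v ≠ 0 := fun v =>
    sub_ne_zero_of_mem_sphere_of_mem_closedBall h12 hw
  have hsub : sphere (-1 : ℂ) r₁ ⊆ closedBall (-1) r₁ := sphere_subset_closedBall
  have hdiff : ∀ v ∈ closedBall (-1 : ℂ) r₁, DifferentiableAt ℂ (mobiusKernel K w) v := by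
    intro v hv
    have := mul_ne_zero (hvK v hv) (hwv v hv)
    unfold mobiusKernel
    fun_prop (disch := assumption)
  have ht := mobiusCoord_ne_zero (hr.trans h12) hrK hw
  have hstep := mobiusCoord_mul_circleIntegral (w := w) hr h1K
    (fun v hv => (hdiff v (hsub hv)).continuousAt.continuousWithinAt)
    (fun v hv => mobiusKernel_mul_sub hwK (hvK v (hsub hv)) (hwv v (hsub hv)))
  induction n with
  | zero =>
    simpa using circleIntegral_mul_mobiusCoord_pow_eq_zero hr.le h1K hdiff 0
  | succ n ih =>
    have := hstep (-((n + 1 : ℕ) : ℤ))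
    rw [show -((n + 1 : ℕ) : ℤ) + 1 = -n by push_cast; ring, ih,
      circleIntegral_mobiusCoordDeriv_mul_zpow hr h1K] at this
    apply mul_left_cancel₀ ht
    rw [this, if_neg n.succ_ne_zero, mul_left_comm, ← zpow_one_add₀ ht,
      show 1 + -((n + 1 : ℕ) : ℤ) = -n by push_cast; ring]
    rcases n.eq_zero_or_pos with rfl | hn
    · simp
    · simp [hn.ne']

theorem circleIntegral_inv_sq_mul_zpow_neg (hr : 0 < r₁) (h12 : r₁ < r₂) (hrK : r₂ < K)
    (hw : w ∈ sphere (-1 : ℂ) r₂) (n : ℕ) :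
    ∮ v in C(-1, r₁), ((w - v) ^ 2)⁻¹ * mobiusCoord K v ^ (-(n : ℤ))
      = 2 * Real.pi * I * (n * mobiusCoordDeriv K w * mobiusCoord K w ^ (-(n : ℤ) - 1)) := by
  have h1K := h12.trans hrK
  have hwK := add_one_sub_ne_zero_of_mem_closedBall hrK (sphere_subset_closedBall hw)
  have hwv : ∀ v ∈ closedBall (-1 : ℂ) r₁, w - v ≠ 0 := fun v =>
    sub_ne_zero_of_mem_sphere_of_mem_closedBall h12 hw
  have hsub : sphere (-1 : ℂ) r₁ ⊆ closedBall (-1) r₁ := sphere_subset_closedBall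
  have hdiff : ∀ v ∈ closedBall (-1 : ℂ) r₁, DifferentiableAt ℂ (fun v => ((w - v) ^ 2)⁻¹) v := by
    intro v hv
    have := pow_ne_zero 2 (hwv v hv)
    fun_prop (disch := assumption)
  have ht := mobiusCoord_ne_zero (hr.trans h12) hrK hw
  have hstep := mobiusCoord_mul_circleIntegral (w := w) hr h1K
    (fun v hv => (hdiff v (hsub hv)).continuousAt.continuousWithinAt)
    (fun v hv => inv_sq_mul_mobiusCoord_sub hwK
      (add_one_sub_ne_zero_of_mem_closedBall h1K (hsub hv)) (hwv v (hsub hv)))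
  induction n with
  | zero => simpa using circleIntegral_mul_mobiusCoord_pow_eq_zero hr.le h1K hdiff 0
  | succ n ih =>
    have := hstep (-((n + 1 : ℕ) : ℤ))
    simp only [mul_assoc, circleIntegral.integral_const_mul] at this
    rw [show -((n + 1 : ℕ) : ℤ) + 1 = -n by push_cast; ring, ih,
      circleIntegral_mobiusKernel_mul_zpow hr h12 hrK hw, if_neg n.succ_ne_zero] at this
    apply mul_left_cancel₀ ht
    rw [this, zpow_sub_one₀ ht, zpow_sub_one₀ ht, show -(n : ℤ) = -((n + 1 : ℕ) : ℤ) + 1 by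
      push_cast; ring, zpow_add_one₀ ht]
    push_cast
    field_simp
    ring

theorem circleIntegral_inv_sq_mul_zpow (hr : 0 < r₁) (h12 : r₁ < r₂) (hrK : r₂ < K)
    (hw : w ∈ sphere (-1 : ℂ) r₂) (j : ℤ) :
    ∮ v in C(-1, r₁), ((w - v) ^ 2)⁻¹ * mobiusCoord K v ^ j
      = 2 * Real.pi * I * ((-j).toNat * mobiusCoordDeriv K w * mobiusCoord K w ^ (j - 1)) := by
  obtain ⟨n, rfl | rfl⟩ := j.eq_nat_or_neg
  · rw [circleIntegral_mul_mobiusCoord_pow_eq_zero hr.le (h12.trans hrK) fun v hv => ?_]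
    · simp
    · have := pow_ne_zero 2 (sub_ne_zero_of_mem_sphere_of_mem_closedBall h12 hw hv)
      fun_prop (disch := assumption)
  · rw [circleIntegral_inv_sq_mul_zpow_neg hr h12 hrK hw]
    simp

/-- The Laurent polynomial `p t + x + q / t` in the coordinate `t = mobiusCoord K v`. -/
noncomputable def mobiusSymbol (p x q : ℂ) (K : ℝ) (v : ℂ) : ℂ :=
  p * mobiusCoord K v + x + q * (mobiusCoord K v)⁻¹

variable (p x q : ℂ)

theorem circleIntegral_mul_mobiusSymbol_pow (hr : 0 < r) (hrK : r < K) {g : ℂ → ℂ}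
    (hg : ContinuousOn g (sphere (-1) r)) (k : ℕ) :
    ∮ v in C(-1, r), g v * mobiusSymbol p x q K v ^ k = ∑ j ∈ Finset.Icc (-k : ℤ) k,
      stepCoeff p x q k j * ∮ v in C(-1, r), g v * mobiusCoord K v ^ j := by
  simp only [← circleIntegral.integral_const_mul]
  rw [← circleIntegral.integral_fun_sum]
  · refine circleIntegral.integral_congr hr.le fun v hv => ?_
    simp only [mobiusSymbol]
    rw [← sum_stepCoeff_mul_zpow p x q (mobiusCoord_ne_zero hr hrK hv) k subset_rfl, mul_sum]
    exact sum_congr rfl fun j _ => mul_left_comm _ _ _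
  · exact fun j _ => ((hg.mul
      (continuousOn_mobiusCoord_zpow hr hrK j)).const_mul _).circleIntegrable hr.le

theorem circleIntegral_zpow_mul_mobiusSymbol_pow (hr : 0 < r) (hrK : r < K) (j : ℤ) (k : ℕ) :
    ∮ v in C(-1, r), mobiusCoordDeriv K v * mobiusCoord K v ^ (j - 1) * mobiusSymbol p x q K v ^ k
      = 2 * Real.pi * I * stepCoeff p x q k (-j) := by
  rw [circleIntegral_mul_mobiusSymbol_pow p x q hr hrK]
  · have hmonomial (i : ℤ) :
        ∮ v in C(-1, r), mobiusCoordDeriv K v * mobiusCoord K v ^ (j - 1) * mobiusCoord K v ^ i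
          = if i = -j then 2 * Real.pi * I else 0 := by
      rw [circleIntegral.integral_congr (g := fun v =>
          mobiusCoordDeriv K v * mobiusCoord K v ^ (j - 1 + i)) hr.le fun v hv => by
        simp only [mul_assoc, zpow_add₀ (mobiusCoord_ne_zero hr hrK hv)],
        circleIntegral_mobiusCoordDeriv_mul_zpow hr hrK]
      exact if_congr (by omega) rfl rfl
    simp only [hmonomial, mul_ite, mul_zero, sum_ite_eq', Finset.mem_Icc]
    split_ifs with h
    · ring
    · rw [stepCoeff_eq_zero (by rw [lt_abs]; omega), mul_zero]
  · exact ((continuousOn_mobiusCoordDeriv hrK).mono sphere_subset_closedBall).mul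
      (continuousOn_mobiusCoord_zpow hr hrK _)

theorem circleIntegral_circleIntegral_mobiusSymbol (hr : 0 < r₁) (h12 : r₁ < r₂) (hrK : r₂ < K)
    (k l : ℕ) :
    (∮ w in C(-1, r₂), ∮ v in C(-1, r₁), ((w - v) ^ 2)⁻¹ * mobiusSymbol p x q K v ^ k
      * mobiusSymbol p x q K w ^ l) = (2 * Real.pi * I) ^ 2 * residuePairing p x q k l := by
  have hr2 := hr.trans h12
  have hinner : ∀ w ∈ sphere (-1 : ℂ) r₂, (∮ v in C(-1, r₁), ((w - v) ^ 2)⁻¹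
      * mobiusSymbol p x q K v ^ k * mobiusSymbol p x q K w ^ l)
      = ∑ j ∈ Finset.Icc (-k : ℤ) k, stepCoeff p x q k j * (2 * Real.pi * I * (-j).toNat) *
        (mobiusCoordDeriv K w * mobiusCoord K w ^ (j - 1) * mobiusSymbol p x q K w ^ l) := by
    intro w hw
    simp only [mul_comm _ (mobiusSymbol p x q K w ^ l), circleIntegral.integral_const_mul]
    rw [circleIntegral_mul_mobiusSymbol_pow p x q hr (h12.trans hrK), mul_sum]
    · refine sum_congr rfl fun j _ => ?_
      rw [circleIntegral_inv_sq_mul_zpow hr h12 hrK hw]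
      ring
    · exact ContinuousOn.inv₀ (by fun_prop) fun v hv => pow_ne_zero 2
        (sub_ne_zero_of_mem_sphere_of_mem_closedBall h12 hw (sphere_subset_closedBall hv))
  have hcont (j : ℤ) : ContinuousOn (fun w => mobiusCoordDeriv K w * mobiusCoord K w ^ (j - 1)
      * mobiusSymbol p x q K w ^ l) (sphere (-1) r₂) := by
    have hcoord := (continuousOn_mobiusCoord (K := K) hrK).mono sphere_subset_closedBall
    have hinv := hcoord.inv₀ fun v hv => mobiusCoord_ne_zero hr2 hrK hv
    have hsymbol : ContinuousOn (mobiusSymbol p x q K) (sphere (-1) r₂) :=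
      ((hcoord.const_mul p).add continuousOn_const).add (hinv.const_mul q)
    exact (((continuousOn_mobiusCoordDeriv hrK).mono sphere_subset_closedBall).mul
      (continuousOn_mobiusCoord_zpow hr2 hrK _)).mul (hsymbol.pow l)
  rw [circleIntegral.integral_congr hr2.le hinner,
    circleIntegral.integral_fun_sum fun j _ => ((hcont j).const_mul _).circleIntegrable hr2.le]
  simp only [circleIntegral.integral_const_mul,
    circleIntegral_zpow_mul_mobiusSymbol_pow p x q hr2 hrK]
  rw [residuePairing, mul_sum]
  symm
  refine sum_of_injOn (fun i : ℕ => -(i : ℤ)) (by simp [Set.InjOn]) ?_ ?_ fun i _ => ?_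
  · intro i hi
    simp at hi ⊢
    omega
  · intro j hj hj'
    have : (-j).toNat = 0 := by
      by_contra h
      exact hj' ⟨(-j).toNat, by simp at hj ⊢; omega, by simp; omega⟩
    simp [this]
  · simp only [neg_neg, Int.toNat_natCast]
    ring

theorem mobiusSymbol_weights {a m : ℝ} (hK : 1 + a + m ≠ 0) {v : ℂ} (h₁ : v + 1 ≠ 0)
    (h₂ : v + 1 - (1 + a + m : ℝ) ≠ 0) :
    mobiusSymbol (upWeight a m) (stayWeight a m) (downWeight a m) (1 + a + m) v
      = v / (v + 1) * ((v - a) / (v - a - m)) := by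
  have hK' : 1 + (a : ℂ) + m ≠ 0 := by exact_mod_cast hK
  have h₃ : v - a - m ≠ 0 := fun h => h₂ (by push_cast; linear_combination h)
  push_cast at h₂
  simp only [mobiusSymbol, mobiusCoord, stayWeight, upWeight, downWeight]
  push_cast
  rw [show v + 1 - (1 + (a : ℂ) + m) = v - a - m by ring]
  field_simp
  ring

theorem circleIntegral_circleIntegral_eq_limitCov {a m r₁ r₂ : ℝ} (hr : 0 < r₁) (h12 : r₁ < r₂)
    (hrK : r₂ < 1 + a + m) (k l : ℕ) :
    (∮ v₂ in C(-1, r₂), (∮ v₁ in C(-1, r₁), ((v₂ - v₁) ^ 2)⁻¹ *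
        (v₁ / (v₁ + 1) * ((v₁ - (a : ℂ)) / (v₁ - a - m))) ^ k *
        (v₂ / (v₂ + 1) * ((v₂ - (a : ℂ)) / (v₂ - a - m))) ^ l))
      = (2 * Real.pi * I) ^ 2 * limitCov a m k l := by
  have hsymbol {r : ℝ} (hr : 0 < r) (hrK : r < 1 + a + m) {v : ℂ}
      (hv : v ∈ Metric.sphere (-1 : ℂ) r) := mobiusSymbol_weights (hr.trans hrK).ne'
    (add_one_ne_zero_of_mem_sphere hr hv)
    (add_one_sub_ne_zero_of_mem_closedBall hrK (Metric.sphere_subset_closedBall hv))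
  have hcast : (limitCov a m k l : ℂ) = residuePairing (upWeight a m : ℂ) (stayWeight a m)
      (downWeight a m) k l := map_residuePairing ofRealHom _ _ _ k l
  rw [hcast, ← circleIntegral_circleIntegral_mobiusSymbol _ _ _ hr h12 hrK]
  refine circleIntegral.integral_congr (hr.trans h12).le fun w hw =>
    circleIntegral.integral_congr hr.le fun v hv => ?_
  simp only [hsymbol hr (h12.trans hrK) hv, hsymbol (hr.trans h12) hrK hw]

end Contour

/-! ### Fluctuations under expectation functionals -/

section State

variable {X : Type*} [TopologicalSpace X]

/-- A linear functional `E` on continuous functions is an expectation carried by `K` if it is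
normalized and nonnegative on functions that are nonnegative on `K`. -/
structure IsExpectationOn (K : Set X) (E : C(X, ℝ) →ₗ[ℝ] ℝ) : Prop where
  map_one : E 1 = 1
  nonneg : ∀ f : C(X, ℝ), (∀ x ∈ K, 0 ≤ f x) → 0 ≤ E f

/-- The fluctuation `f - E f` of an observable `f`. -/
def centered (E : C(X, ℝ) →ₗ[ℝ] ℝ) (f : C(X, ℝ)) : C(X, ℝ) := f - E f • 1

/-- The covariance of two observables under the expectation functional `E`. -/
def covOf (E : C(X, ℝ) →ₗ[ℝ] ℝ) (f g : C(X, ℝ)) : ℝ := E (centered E f * centered E g)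

variable {K : Set X} {E : C(X, ℝ) →ₗ[ℝ] ℝ}

theorem covOf_comm (f g : C(X, ℝ)) : covOf E f g = covOf E g f := by
  rw [covOf, covOf, mul_comm]

theorem centered_add (f g : C(X, ℝ)) : centered E (f + g) = centered E f + centered E g := by
  simp only [centered, map_add, add_smul]; abel

theorem centered_smul (c : ℝ) (f : C(X, ℝ)) : centered E (c • f) = c • centered E f := by
  simp only [centered, map_smul, smul_sub, smul_assoc]

namespace IsExpectationOn

theorem mono (h : IsExpectationOn K E) {f g : C(X, ℝ)} (hfg : ∀ x ∈ K, f x ≤ g x) :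
    E f ≤ E g := by
  have := h.nonneg (g - f) fun x hx => by simpa using hfg x hx
  rwa [map_sub, sub_nonneg] at this

theorem abs_map_le (h : IsExpectationOn K E) {f g : C(X, ℝ)} (hfg : ∀ x ∈ K, |f x| ≤ g x) :
    |E f| ≤ E g :=
  abs_le.mpr ⟨by simpa using h.mono (f := -g) fun x hx => (abs_le.mp (hfg x hx)).1,
    h.mono fun x hx => (abs_le.mp (hfg x hx)).2⟩

theorem map_smul_one (h : IsExpectationOn K E) (c : ℝ) : E (c • 1) = c := by
  rw [map_smul, h.map_one, smul_eq_mul, mul_one]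

theorem map_centered (h : IsExpectationOn K E) (f : C(X, ℝ)) : E (centered E f) = 0 := by
  rw [centered, map_sub, h.map_smul_one, sub_self]

theorem centered_smul_one (h : IsExpectationOn K E) (c : ℝ) : centered E (c • 1) = 0 := by
  rw [centered, h.map_smul_one, sub_self]

theorem pow_four_nonneg (h : IsExpectationOn K E) (f : C(X, ℝ)) : 0 ≤ E (f ^ 4) :=
  h.nonneg _ fun x _ => by rw [ContinuousMap.pow_apply]; positivity

theorem sq_map_le (h : IsExpectationOn K E) (f : C(X, ℝ)) : E f ^ 2 ≤ E (f ^ 2) := by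
  have hvar := h.nonneg (centered E f ^ 2) fun x _ => sq_nonneg (centered E f x)
  have hsq : centered E f ^ 2 = f ^ 2 - (2 * E f) • f + (E f ^ 2) • 1 := by
    ext x; simp [centered]; ring
  rw [hsq, map_add, map_sub, map_smul, h.map_smul_one, smul_eq_mul] at hvar
  linarith

theorem pow_four_map_le (h : IsExpectationOn K E) (f : C(X, ℝ)) : E f ^ 4 ≤ E (f ^ 4) :=
  calc E f ^ 4 = (E f ^ 2) ^ 2 := by ring
    _ ≤ E (f ^ 2) ^ 2 := pow_le_pow_left₀ (sq_nonneg _) (h.sq_map_le f) 2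
    _ ≤ E ((f ^ 2) ^ 2) := h.sq_map_le _
    _ = E (f ^ 4) := by rw [← pow_mul]

theorem map_pow_four_add_le (h : IsExpectationOn K E) (f g : C(X, ℝ)) :
    E ((f + g) ^ 4) ≤ 8 * (E (f ^ 4) + E (g ^ 4)) := by
  have := h.mono (f := (f + g) ^ 4) (g := (8 : ℝ) • (f ^ 4 + g ^ 4)) fun x _ => by
    have hpow := Even.add_pow_le (show Even 4 by decide) (a := f x) (b := g x)
    norm_num at hpow
    simpa [mul_add] using hpow
  rwa [map_smul, map_add] at this

theorem map_centered_pow_four_le (h : IsExpectationOn K E) (f : C(X, ℝ)) (c : ℝ) :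
    E (centered E f ^ 4) ≤ 16 * E ((f - c • 1) ^ 4) := by
  have hshift : centered E f = (f - c • 1) + (-E (f - c • 1)) • 1 := by
    rw [map_sub, h.map_smul_one]
    ext x; simp [centered]
  have hconst (e : ℝ) : E ((e • (1 : C(X, ℝ))) ^ 4) = e ^ 4 := by
    rw [smul_pow, one_pow, h.map_smul_one]
  have hadd := h.map_pow_four_add_le (f - c • 1) ((-E (f - c • 1)) • 1)
  rw [← hshift, hconst, Even.neg_pow (by decide)] at hadd
  linarith [h.pow_four_map_le (f - c • 1)]

theorem abs_map_mul_mul_le (h : IsExpectationOn K E) (f g k : C(X, ℝ)) :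
    |E (f * (g * k))| ≤ 1 + E (f ^ 4) + E (g ^ 4) + E (k ^ 4) := by
  have hbound (x y z : ℝ) : |x * (y * z)| ≤ 1 + x ^ 4 + y ^ 4 + z ^ 4 := by
    rw [abs_le]
    constructor <;>
      nlinarith [sq_nonneg (x + y * z), sq_nonneg (x - y * z), sq_nonneg (x ^ 2 - 1),
        sq_nonneg (y ^ 2 - z ^ 2), sq_nonneg (x ^ 2), sq_nonneg (y ^ 2), sq_nonneg (z ^ 2)]
  have := h.abs_map_le (f := f * (g * k)) (g := 1 + f ^ 4 + g ^ 4 + k ^ 4) fun x _ => by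
    simpa using hbound (f x) (g x) (k x)
  simpa only [map_add, h.map_one] using this

theorem map_mul (h : IsExpectationOn K E) (f g : C(X, ℝ)) :
    E (f * g) = E f * E g + covOf E f g := by
  have hfg : f * g = E f • g + E g • f - (E f * E g) • 1 + centered E f * centered E g := by
    ext x; simp [centered]; ring
  rw [hfg, map_add, map_sub, map_add, map_smul, map_smul, h.map_smul_one, covOf, smul_eq_mul,
    smul_eq_mul]
  ring

theorem map_centered_mul (h : IsExpectationOn K E) (f g : C(X, ℝ)) :
    E (centered E f * g) = covOf E f g := by
  have hg : centered E f * g = E g • centered E f + centered E f * centered E g := by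
    ext x; simp [centered]; ring
  rw [hg, map_add, map_smul, h.map_centered, smul_zero, zero_add, covOf]

theorem map_centered_mul_mul (h : IsExpectationOn K E) (f g k : C(X, ℝ)) :
    E (centered E f * (g * k)) = E g * covOf E k f + E k * covOf E g f
      + E (centered E f * (centered E g * centered E k)) := by
  have hgk : centered E f * (g * k) = E g • (centered E f * k) + E k • (centered E f * g)
      - (E g * E k) • centered E f + centered E f * (centered E g * centered E k) := by
    ext x; simp [centered]; ring
  rw [hgk, map_add, map_sub, map_add, map_smul, map_smul, map_smul, h.map_centered,
    h.map_centered_mul, h.map_centered_mul, covOf_comm k, covOf_comm g]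
  simp

theorem map_centered_mul_pow_four_le (h : IsExpectationOn K E) {f g : C(X, ℝ)} {B : ℝ}
    (hf : ∀ x ∈ K, |f x| ≤ B) (hg : ∀ x ∈ K, |g x| ≤ B) :
    E (centered E (f * g) ^ 4)
      ≤ 128 * B ^ 4 * (E (centered E f ^ 4) + E (centered E g ^ 4)) := by
  have hEg : |E g| ≤ B :=
    (h.abs_map_le (g := B • 1) (by simpa using hg)).trans_eq (h.map_smul_one B)
  have hscale (c : C(X, ℝ)) (k : C(X, ℝ)) (hc : ∀ x ∈ K, |c x| ≤ B) :
      E ((c * k) ^ 4) ≤ B ^ 4 * E (k ^ 4) := by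
    have := h.mono (f := (c * k) ^ 4) (g := B ^ 4 • k ^ 4) fun x hx => by
      have hpow := pow_le_pow_left₀ (abs_nonneg _) (hc x hx) 4
      rw [Even.pow_abs (by decide)] at hpow
      simpa [mul_pow] using mul_le_mul_of_nonneg_right hpow (by positivity : 0 ≤ k x ^ 4)
    rwa [map_smul] at this
  have hsplit : f * g - (E f * E g) • 1 = f * centered E g + (E g • 1) * centered E f := by
    ext x; simp [centered]; ring
  have hcenter := h.map_centered_pow_four_le (f * g) (E f * E g)
  have hadd := h.map_pow_four_add_le (f * centered E g) ((E g • 1) * centered E f)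
  rw [hsplit] at hcenter
  linarith [hscale f (centered E g) hf,
    hscale (E g • 1) (centered E f) (by simpa using fun _ _ => hEg)]

theorem map_pow_four_le_of_mul_map_eq (h : IsExpectationOn K E) {t f D : C(X, ℝ)} {B L b : ℝ}
    (heq : B * E (t ^ 4) = E (t ^ 3 * f) + E (t ^ 2 * D)) (hL : 0 < L) (hLB : L ≤ B)
    (hD : ∀ x ∈ K, |D x| ≤ b) :
    E (t ^ 4) ≤ 128 / L ^ 4 * E (f ^ 4) + 2 * (b / L) ^ 2 := by
  have hcubic : E (t ^ 3 * f) ≤ L / 4 * E (t ^ 4) + 64 / L ^ 3 * E (f ^ 4) := by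
    have := h.mono (f := t ^ 3 * f) (g := (L / 4) • t ^ 4 + (64 / L ^ 3) • f ^ 4) fun x _ => by
      have hyoung (u v : ℝ) : u ^ 3 * v ≤ u ^ 4 + v ^ 4 := by
        nlinarith [sq_nonneg (u ^ 2 - u * v), sq_nonneg (u ^ 2 - v ^ 2), sq_nonneg (u ^ 2),
          sq_nonneg (v ^ 2), sq_nonneg (u * v)]
      have hscaled := mul_le_mul_of_nonneg_left (hyoung (t x) (4 * f x / L)) (by positivity :
        0 ≤ L / 4)
      calc t x ^ 3 * f x = L / 4 * (t x ^ 3 * (4 * f x / L)) := by field_simp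
        _ ≤ L / 4 * (t x ^ 4 + (4 * f x / L) ^ 4) := hscaled
        _ = L / 4 * t x ^ 4 + 64 / L ^ 3 * f x ^ 4 := by field_simp; ring
    simpa using this
  have hquadratic : E (t ^ 2 * D) ≤ L / 4 * E (t ^ 4) + b ^ 2 / L := by
    have := h.mono (f := t ^ 2 * D) (g := (L / 4) • t ^ 4 + (b ^ 2 / L) • 1) fun x hx => by
      calc t x ^ 2 * D x ≤ t x ^ 2 * b :=
            mul_le_mul_of_nonneg_left ((le_abs_self _).trans (hD x hx)) (sq_nonneg _)
        _ = L / 4 * t x ^ 4 + b ^ 2 / L - (L * t x ^ 2 - 2 * b) ^ 2 / (4 * L) := by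
            field_simp; ring
        _ ≤ L / 4 * t x ^ 4 + b ^ 2 / L := sub_le_self _ (by positivity)
        _ = ((L / 4) • t ^ 4 + (b ^ 2 / L) • (1 : C(X, ℝ))) x := by simp
    simpa [h.map_one] using this
  have hlower := mul_le_mul_of_nonneg_right hLB (h.pow_four_nonneg t)
  calc E (t ^ 4) = 2 / L * (L / 2 * E (t ^ 4)) := by field_simp
    _ ≤ 2 / L * (64 / L ^ 3 * E (f ^ 4) + b ^ 2 / L) := by gcongr; linarith
    _ = 128 / L ^ 4 * E (f ^ 4) + 2 * (b / L) ^ 2 := by field_simp; ring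

end IsExpectationOn

end State

section Fluctuations

open Filter Asymptotics Topology

variable {X : ℕ → Type*} [∀ N, TopologicalSpace (X N)] {K : ∀ N, Set (X N)}
  {E : ∀ N, C(X N, ℝ) →ₗ[ℝ] ℝ} {f g k : ∀ N, C(X N, ℝ)} {d : ℕ}

/-- The observables `f N` fluctuate on the scale `N ^ d` (in fourth moment). -/
def FluctuatesAtScale (E : ∀ N, C(X N, ℝ) →ₗ[ℝ] ℝ) (f : ∀ N, C(X N, ℝ)) (d : ℕ) : Prop :=
  (fun N => E N (centered (E N) (f N) ^ 4)) =O[atTop] fun N => ((N : ℝ) ^ d) ^ 4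

namespace FluctuatesAtScale

theorem add (hE : ∀ᶠ N in atTop, IsExpectationOn (K N) (E N)) (hf : FluctuatesAtScale E f d)
    (hg : FluctuatesAtScale E g d) : FluctuatesAtScale E (fun N => f N + g N) d := by
  refine IsBigO.trans (IsBigO.of_bound' ?_) ((IsBigO.add hf hg).const_mul_left 8)
  filter_upwards [hE] with N h
  rw [Real.norm_of_nonneg (h.pow_four_nonneg _), centered_add]
  exact (h.map_pow_four_add_le _ _).trans (le_abs_self _)

theorem smul {c : ℕ → ℝ} {d' : ℕ} (hc : c =O[atTop] fun N => (N : ℝ) ^ d')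
    (hf : FluctuatesAtScale E f d) : FluctuatesAtScale E (fun N => c N • f N) (d' + d) := by
  have hprod := (hc.pow 4).mul hf
  simp only [← mul_pow, ← pow_add] at hprod
  refine hprod.congr_left fun N => ?_
  rw [centered_smul, smul_pow, map_smul, smul_eq_mul]

theorem const_smul (c : ℝ) (hf : FluctuatesAtScale E f d) :
    FluctuatesAtScale E (fun N => c • f N) d := by
  have hc : (fun _ : ℕ => c) =O[atTop] fun N => (N : ℝ) ^ 0 := by
    simpa using isBigO_const_one ℝ c atTop
  simpa using hf.smul hc

theorem sub (hE : ∀ᶠ N in atTop, IsExpectationOn (K N) (E N)) (hf : FluctuatesAtScale E f d)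
    (hg : FluctuatesAtScale E g d) : FluctuatesAtScale E (fun N => f N - g N) d := by
  simpa [sub_eq_add_neg] using hf.add hE (hg.const_smul (-1))

theorem sum {ι : Type*} (hE : ∀ᶠ N in atTop, IsExpectationOn (K N) (E N)) (s : Finset ι)
    {f : ι → ∀ N, C(X N, ℝ)} (hf : ∀ i ∈ s, FluctuatesAtScale E (f i) d) :
    FluctuatesAtScale E (fun N => ∑ i ∈ s, f i N) d := by
  classical
  induction s using Finset.induction_on with
  | empty => simpa [FluctuatesAtScale, centered] using isBigO_zero _ _
  | insert i s hi ih =>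
    simp only [Finset.sum_insert hi]
    exact (hf i (s.mem_insert_self i)).add hE
      (ih fun j hj => hf j (Finset.mem_insert_of_mem hj))

theorem mul (hE : ∀ᶠ N in atTop, IsExpectationOn (K N) (E N)) (hf : FluctuatesAtScale E f d)
    (hg : FluctuatesAtScale E g d) (hf' : ∀ᶠ N in atTop, ∀ x ∈ K N, |f N x| ≤ N)
    (hg' : ∀ᶠ N in atTop, ∀ x ∈ K N, |g N x| ≤ N) :
    FluctuatesAtScale E (fun N => f N * g N) (d + 1) := by
  have hprod := ((isBigO_refl (fun N : ℕ => (N : ℝ) ^ 4) atTop).mul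
    (IsBigO.add hf hg)).const_mul_left 128
  simp only [← mul_pow, ← pow_succ'] at hprod
  refine IsBigO.trans (IsBigO.of_bound' ?_) hprod
  filter_upwards [hE, hf', hg'] with N h hfN hgN
  rw [Real.norm_of_nonneg (h.pow_four_nonneg _), ← mul_assoc]
  exact (h.map_centered_mul_pow_four_le hfN hgN).trans (le_abs_self _)

theorem isBigO_map_centered_mul_mul (hE : ∀ᶠ N in atTop, IsExpectationOn (K N) (E N))
    (hf : FluctuatesAtScale E f 0) (hg : FluctuatesAtScale E g 0) (hk : FluctuatesAtScale E k 0) :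
    (fun N => E N (centered (E N) (f N) * (centered (E N) (g N) * centered (E N) (k N))))
      =O[atTop] fun _ => (1 : ℝ) := by
  simp only [FluctuatesAtScale, pow_zero, one_pow] at hf hg hk
  refine IsBigO.trans (IsBigO.of_bound' ?_)
    ((((isBigO_const_one ℝ (1 : ℝ) atTop).add hf).add hg).add hk)
  filter_upwards [hE] with N h
  exact (h.abs_map_mul_mul_le _ _ _).trans (le_abs_self _)

theorem isBigO_covOf (hE : ∀ᶠ N in atTop, IsExpectationOn (K N) (E N))
    (hf : FluctuatesAtScale E f 0) (hg : FluctuatesAtScale E g 0) :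
    (fun N => covOf (E N) (f N) (g N)) =O[atTop] fun _ => (1 : ℝ) := by
  simp only [FluctuatesAtScale, pow_zero, one_pow] at hf hg
  refine IsBigO.trans (IsBigO.of_bound' ?_)
    ((((isBigO_const_one ℝ (1 : ℝ) atTop).add hf).add hg).add (isBigO_const_one ℝ (1 : ℝ) atTop))
  filter_upwards [hE] with N h
  have := h.abs_map_mul_mul_le (centered (E N) (f N)) (centered (E N) (g N)) 1
  rw [mul_one, one_pow, h.map_one] at this
  exact this.trans (le_abs_self _)

end FluctuatesAtScale

end Fluctuations

/-! ### The Jacobi ensemble -/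

section Ensemble

/-- The unit cube `[0, 1]^N`, the state space of the ensemble. -/
def unitCube (N : ℕ) : Set (Fin N → ℝ) := Set.univ.pi fun _ : Fin N => Set.Icc (0 : ℝ) 1

theorem isCompact_unitCube (N : ℕ) : IsCompact (unitCube N) :=
  isCompact_univ_pi fun _ => isCompact_Icc

theorem measurableSet_unitCube (N : ℕ) : MeasurableSet (unitCube N) :=
  (isCompact_unitCube N).measurableSet

theorem apply_mem_Icc_of_mem_unitCube {N : ℕ} {x : Fin N → ℝ} (hx : x ∈ unitCube N) (i : Fin N) :
    x i ∈ Set.Icc (0 : ℝ) 1 :=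
  hx i (Set.mem_univ i)

variable {θ α : ℝ} {M N : ℕ}

theorem measurable_jacobiDensity : Measurable (jacobiDensity θ α M N) := by
  unfold jacobiDensity
  fun_prop

theorem jacobiDensity_nonneg {x : Fin N → ℝ} (hx : x ∈ unitCube N) :
    0 ≤ jacobiDensity θ α M N x := by
  refine mul_nonneg (Finset.prod_nonneg fun p _ => by positivity) (Finset.prod_nonneg fun i _ => ?_)
  obtain ⟨h0, h1⟩ := apply_mem_Icc_of_mem_unitCube hx i
  exact mul_nonneg (Real.rpow_nonneg h0 _) (Real.rpow_nonneg (sub_nonneg.mpr h1) _)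

theorem jacobiDensity_pos {x : Fin N → ℝ} (hx : ∀ i, x i ∈ Set.Ioo (0 : ℝ) 1)
    (hne : ∀ i j, i < j → x i ≠ x j) : 0 < jacobiDensity θ α M N x := by
  refine mul_pos (Finset.prod_pos fun p hp => ?_) (Finset.prod_pos fun i _ => ?_)
  · have hdist := hne _ _ (Finset.mem_filter.mp hp).2
    exact Real.rpow_pos_of_pos (abs_pos.mpr (sub_ne_zero.mpr hdist)) _
  · exact mul_pos (Real.rpow_pos_of_pos (hx i).1 _)
      (Real.rpow_pos_of_pos (sub_pos.mpr (hx i).2) _)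

theorem integrableOn_rpow_mul_one_sub_rpow {a b : ℝ} (ha : 0 < a) (hb : 0 < b) :
    IntegrableOn (fun x : ℝ => x ^ (a - 1) * (1 - x) ^ (b - 1)) (Set.Icc 0 1) := by
  have h := Complex.betaIntegral_convergent (u := a) (v := b) (by simpa) (by simpa)
  rw [intervalIntegrable_iff_integrableOn_Icc_of_le zero_le_one] at h
  refine IntegrableOn.congr_fun h.re (fun x hx => ?_) measurableSet_Icc
  have hreal : (x : ℂ) ^ ((a : ℂ) - 1) * (1 - (x : ℂ)) ^ ((b : ℂ) - 1)
      = ((x ^ (a - 1) * (1 - x) ^ (b - 1) : ℝ) : ℂ) := by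
    rw [Complex.ofReal_mul, Complex.ofReal_cpow hx.1, Complex.ofReal_cpow (sub_nonneg.mpr hx.2)]
    push_cast
    rfl
  simp only [hreal, RCLike.re_to_complex, Complex.ofReal_re]

theorem integrableOn_jacobiDensity (hθ : 0 < θ) (hα : 0 < α) (hM : N ≤ M) :
    IntegrableOn (jacobiDensity θ α M N) (unitCube N) := by
  have hbeta : IntegrableOn (fun x : Fin N → ℝ => ∏ i : Fin N,
      (x i ^ (θ * α - 1) * (1 - x i) ^ (θ * ((M : ℝ) - N) + θ - 1))) (unitCube N) := by
    rw [IntegrableOn, unitCube, volume_pi, Measure.restrict_pi_pi]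
    refine Integrable.fintype_prod (f := fun (_ : Fin N) (y : ℝ) =>
      y ^ (θ * α - 1) * (1 - y) ^ (θ * ((M : ℝ) - N) + θ - 1)) fun _ => ?_
    have hNM : (N : ℝ) ≤ M := by exact_mod_cast hM
    exact integrableOn_rpow_mul_one_sub_rpow (by positivity) (by nlinarith)
  refine Integrable.mono hbeta measurable_jacobiDensity.aestronglyMeasurable
    ((ae_restrict_iff' (measurableSet_unitCube N)).mpr (.of_forall fun x hx => ?_))
  rw [jacobiDensity, norm_mul]
  refine mul_le_of_le_one_left (norm_nonneg _) ?_
  rw [Real.norm_of_nonneg (Finset.prod_nonneg fun p _ => by positivity)]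
  refine Finset.prod_le_one (fun p _ => by positivity) fun p _ => ?_
  obtain ⟨hi0, hi1⟩ := apply_mem_Icc_of_mem_unitCube hx p.1
  obtain ⟨hj0, hj1⟩ := apply_mem_Icc_of_mem_unitCube hx p.2
  exact Real.rpow_le_one (abs_nonneg _) (abs_le.mpr ⟨by linarith, by linarith⟩) (by positivity)

theorem jacobiMeasureRaw_univ : jacobiMeasureRaw θ α M N Set.univ
    = ∫⁻ x in unitCube N, ENNReal.ofReal (jacobiDensity θ α M N x) := by
  rw [jacobiMeasureRaw, withDensity_apply _ MeasurableSet.univ, Measure.restrict_univ, unitCube]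

theorem jacobiMeasureRaw_univ_ne_top (hθ : 0 < θ) (hα : 0 < α) (hM : N ≤ M) :
    jacobiMeasureRaw θ α M N Set.univ ≠ ⊤ := by
  rw [jacobiMeasureRaw_univ]
  exact (integrableOn_jacobiDensity hθ hα hM).lintegral_lt_top.ne

theorem jacobiMeasureRaw_univ_ne_zero : jacobiMeasureRaw θ α M N Set.univ ≠ 0 := by
  set U : Set (Fin N → ℝ) :=
    (Set.univ.pi fun _ => Set.Ioo 0 1) ∩ {x | ∀ i j, i < j → x i ≠ x j}
  have hopen : IsOpen U := by
    refine (isOpen_set_pi Set.finite_univ fun _ _ => isOpen_Ioo).inter ?_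
    simp only [Set.ofPred_forall]
    exact isOpen_iInter_of_finite fun i => isOpen_iInter_of_finite fun j =>
      isOpen_iInter_of_finite fun _ => isOpen_ne_fun (continuous_apply i) (continuous_apply j)
  have hnonempty : U.Nonempty := by
    refine ⟨fun i => ((i : ℝ) + 1) / (N + 1), fun i _ => ⟨by positivity, ?_⟩, fun i j hij => ?_⟩
    · rw [div_lt_one (by positivity), add_lt_add_iff_right]
      exact_mod_cast i.2
    · refine ((div_lt_div_iff_of_pos_right (by positivity)).mpr ?_).ne
      exact_mod_cast Nat.succ_lt_succ hij
  have hsub : U ⊆ (Function.support fun x => ENNReal.ofReal (jacobiDensity θ α M N x))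
      ∩ unitCube N := fun x ⟨hx, hne⟩ =>
    ⟨(ENNReal.ofReal_pos.mpr (jacobiDensity_pos (fun i => hx i trivial) hne)).ne',
      fun i _ => Set.Ioo_subset_Icc_self (hx i trivial)⟩
  rw [jacobiMeasureRaw_univ, ← pos_iff_ne_zero,
    lintegral_pos_iff_support measurable_jacobiDensity.ennreal_ofReal,
    Measure.restrict_apply' (measurableSet_unitCube N)]
  exact (hopen.measure_pos volume hnonempty).trans_le (measure_mono hsub)

theorem isProbabilityMeasure_jacobiEnsemble (hθ : 0 < θ) (hα : 0 < α) (hM : N ≤ M) :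
    IsProbabilityMeasure (jacobiEnsemble θ α M N) :=
  ⟨ENNReal.inv_mul_cancel jacobiMeasureRaw_univ_ne_zero (jacobiMeasureRaw_univ_ne_top hθ hα hM)⟩

theorem integral_jacobiEnsemble (f : (Fin N → ℝ) → ℝ) :
    ∫ y, f y ∂ jacobiEnsemble θ α M N = (jacobiMeasureRaw θ α M N Set.univ)⁻¹.toReal *
      ∫ y in unitCube N, jacobiDensity θ α M N y * f y := by
  rw [jacobiEnsemble, integral_smul_measure, smul_eq_mul, jacobiMeasureRaw,
    integral_withDensity_eq_integral_toReal_smul measurable_jacobiDensity.ennreal_ofReal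
      (.of_forall fun _ => ENNReal.ofReal_lt_top)]
  congr 1
  refine setIntegral_congr_fun (measurableSet_unitCube N) fun x hx => ?_
  simp only [ENNReal.toReal_ofReal (jacobiDensity_nonneg hx), smul_eq_mul]

theorem ae_mem_unitCube_jacobiEnsemble : ∀ᵐ y ∂ jacobiEnsemble θ α M N, y ∈ unitCube N :=
  Measure.ae_smul_measure ((withDensity_absolutelyContinuous _ _).ae_le
    (ae_restrict_mem (measurableSet_unitCube N))) _

theorem integrable_jacobiEnsemble (hθ : 0 < θ) (hα : 0 < α) (hM : N ≤ M)
    (f : C(Fin N → ℝ, ℝ)) : Integrable f (jacobiEnsemble θ α M N) := by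
  have := isProbabilityMeasure_jacobiEnsemble hθ hα hM
  obtain ⟨C, hC⟩ :=
    (isCompact_unitCube N).exists_bound_of_continuousOn f.continuous.continuousOn
  exact Integrable.of_bound f.continuous.aestronglyMeasurable C
    (ae_mem_unitCube_jacobiEnsemble.mono hC)

end Ensemble

section ParametricIntegral

variable {V : Type*} [NormedAddCommGroup V] [NormedSpace ℝ V] [MeasurableSpace V]
  [OpensMeasurableSpace V] {μ : Measure V} {K : Set V}

theorem hasDerivAt_integral_mul_of_contDiffAt (hK : IsCompact K) {w : V → ℝ}
    (hw : IntegrableOn w K μ) {G : ℝ × V → ℝ} {δ : ℝ} (hδ : 0 < δ)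
    (hG : ∀ ε ∈ Set.Icc (-δ) δ, ∀ x ∈ K, ContDiffAt ℝ 1 G (ε, x)) {G' : V → ℝ}
    (hG' : ∀ x ∈ K, HasDerivAt (fun ε => G (ε, x)) (G' x) 0) :
    HasDerivAt (fun ε => ∫ x in K, w x * G (ε, x) ∂μ) (∫ x in K, w x * G' x ∂μ) 0 := by
  have hnhds : Set.Icc (-δ) δ ∈ nhds (0 : ℝ) := Icc_mem_nhds (neg_lt_zero.mpr hδ) hδ
  have hKm : MeasurableSet K := hK.measurableSet
  have hGc : ContinuousOn G (Set.Icc (-δ) δ ×ˢ K) := fun z hz =>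
    (hG z.1 hz.1 z.2 hz.2).continuousAt.continuousWithinAt
  have hG'c : ContinuousOn (fun z => fderiv ℝ G z (1, 0)) (Set.Icc (-δ) δ ×ˢ K) := fun z hz =>
    (((hG z.1 hz.1 z.2 hz.2).fderiv_right (m := 0) (by norm_num)).continuousAt.clm_apply
      continuousAt_const).continuousWithinAt
  have hslice {H : ℝ × V → ℝ} (hH : ContinuousOn H (Set.Icc (-δ) δ ×ˢ K)) {ε : ℝ}
      (hε : ε ∈ Set.Icc (-δ) δ) :
      AEStronglyMeasurable (fun x => H (ε, x)) (μ.restrict K) :=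
    ContinuousOn.aestronglyMeasurable_of_isCompact
      (hH.comp (by fun_prop) fun x hx => ⟨hε, hx⟩) hK hKm
  obtain ⟨C, hC⟩ := (isCompact_Icc.prod hK).exists_bound_of_continuousOn hGc
  obtain ⟨C', hC'⟩ := (isCompact_Icc.prod hK).exists_bound_of_continuousOn hG'c
  have h0 := mem_of_mem_nhds hnhds
  have hpartial (ε : ℝ) (hε : ε ∈ Set.Icc (-δ) δ) (x : V) (hx : x ∈ K) :
      HasDerivAt (fun e => G (e, x)) (fderiv ℝ G (ε, x) (1, 0)) ε :=
    ((hG ε hε x hx).differentiableAt one_ne_zero).hasFDerivAt.comp_hasDerivAt ε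
      ((hasDerivAt_id ε).prodMk (hasDerivAt_const ε x))
  rw [setIntegral_congr_fun hKm fun x hx =>
    congrArg (w x * ·) ((hG' x hx).unique (hpartial 0 h0 x hx))]
  refine (hasDerivAt_integral_of_dominated_loc_of_deriv_le (s := Set.Icc (-δ) δ)
    (F' := fun ε x => w x * fderiv ℝ G (ε, x) (1, 0)) (bound := fun x => ‖w x‖ * C')
    hnhds ?_ ?_ (hw.aestronglyMeasurable.mul (hslice hG'c h0)) ?_ (hw.norm.mul_const C') ?_).2
  · filter_upwards [hnhds] with ε hε using hw.aestronglyMeasurable.mul (hslice hGc hε)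
  · exact Integrable.mul_bdd (c := C) hw (hslice hGc h0)
      ((ae_restrict_iff' hKm).mpr (.of_forall fun x hx => hC (0, x) ⟨h0, hx⟩))
  · refine (ae_restrict_iff' hKm).mpr (.of_forall fun x hx ε hε => ?_)
    rw [norm_mul]
    exact mul_le_mul_of_nonneg_left (hC' (ε, x) ⟨hε, hx⟩) (norm_nonneg _)
  · refine (ae_restrict_iff' hKm).mpr (.of_forall fun x hx ε hε => ?_)
    exact (hpartial ε hε x hx).const_mul _

end ParametricIntegral

/-! ### Deformations of the unit cube -/

section Deformation

open Finset

/-- The divided difference of the polynomial `x ^ (n + 1) * (1 - x)`. -/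
def deformSlope (n : ℕ) (x y : ℝ) : ℝ :=
  ∑ ij ∈ antidiagonal n, x ^ ij.1 * y ^ ij.2 - ∑ ij ∈ antidiagonal (n + 1), x ^ ij.1 * y ^ ij.2

theorem sub_mul_sum_antidiagonal_pow_mul_pow (n : ℕ) (x y : ℝ) :
    (x - y) * ∑ ij ∈ antidiagonal n, x ^ ij.1 * y ^ ij.2 = x ^ (n + 1) - y ^ (n + 1) := by
  rw [Nat.sum_antidiagonal_eq_sum_range_succ (fun i j => x ^ i * y ^ j), mul_comm,
    ← geom_sum₂_mul, Nat.succ_eq_add_one, Nat.add_sub_cancel]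

theorem sub_mul_deformSlope (n : ℕ) (x y : ℝ) :
    (x - y) * deformSlope n x y = x ^ (n + 1) * (1 - x) - y ^ (n + 1) * (1 - y) := by
  rw [deformSlope, mul_sub, sub_mul_sum_antidiagonal_pow_mul_pow,
    sub_mul_sum_antidiagonal_pow_mul_pow]
  ring

theorem deformSlope_comm (n : ℕ) (x y : ℝ) : deformSlope n x y = deformSlope n y x := by
  have hcomm (k : ℕ) : ∑ ij ∈ antidiagonal k, x ^ ij.1 * y ^ ij.2
      = ∑ ij ∈ antidiagonal k, y ^ ij.1 * x ^ ij.2 := by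
    rw [← Nat.sum_antidiagonal_swap]
    exact sum_congr rfl fun _ _ => mul_comm _ _
  rw [deformSlope, deformSlope, hcomm, hcomm]

theorem deformSlope_self (n : ℕ) (x : ℝ) :
    deformSlope n x x = (n + 1) * x ^ n - (n + 2) * x ^ (n + 1) := by
  have hdiag (k : ℕ) : ∑ ij ∈ antidiagonal k, x ^ ij.1 * x ^ ij.2 = (k + 1) * x ^ k := by
    rw [sum_congr rfl fun ij hij => by rw [← pow_add, mem_antidiagonal.mp hij], sum_const,
      Nat.card_antidiagonal, nsmul_eq_mul, Nat.cast_succ]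
  rw [deformSlope, hdiag, hdiag]
  push_cast
  ring

theorem abs_deformSlope_le (n : ℕ) {x y : ℝ} (hx : x ∈ Set.Icc (0 : ℝ) 1)
    (hy : y ∈ Set.Icc (0 : ℝ) 1) : |deformSlope n x y| ≤ n + 2 := by
  have hnonneg (k : ℕ) : 0 ≤ ∑ ij ∈ antidiagonal k, x ^ ij.1 * y ^ ij.2 :=
    sum_nonneg fun ij _ => mul_nonneg (pow_nonneg hx.1 _) (pow_nonneg hy.1 _)
  have hle (k : ℕ) : ∑ ij ∈ antidiagonal k, x ^ ij.1 * y ^ ij.2 ≤ k + 1 := by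
    refine (sum_le_card_nsmul _ _ 1 fun ij _ => ?_).trans_eq (by simp)
    exact mul_le_one₀ (pow_le_one₀ hx.1 hx.2) (pow_nonneg hy.1 _) (pow_le_one₀ hy.1 hy.2)
  have hle' := hle (n + 1)
  push_cast at hle'
  rw [deformSlope, abs_le]
  constructor <;> linarith [hnonneg n, hnonneg (n + 1), hle n]

/-- The deformation of the unit interval along the vector field `x ^ (n + 1) * (1 - x)`, which
vanishes at both end points. -/
def deform (n : ℕ) (ε x : ℝ) : ℝ := x + ε * (x ^ (n + 1) * (1 - x))

/-- The deformation of the unit cube by `deform` in every coordinate. -/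
def deformPi {N : ℕ} (n : ℕ) (ε : ℝ) (x : Fin N → ℝ) : Fin N → ℝ := fun i => deform n ε (x i)

/-- The vector field on the unit cube with coordinates `x i ^ (n + 1) * (1 - x i)`; it generates
the deformations `deformPi`. -/
def deformField {N : ℕ} (n : ℕ) (x : Fin N → ℝ) : Fin N → ℝ := fun i => x i ^ (n + 1) * (1 - x i)

variable {n : ℕ} {ε : ℝ}

theorem deform_sub_deform (n : ℕ) (ε x y : ℝ) :
    deform n ε x - deform n ε y = (x - y) * (1 + ε * deformSlope n x y) := by
  rw [deform, deform]
  linear_combination -ε * sub_mul_deformSlope n x y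

theorem hasDerivAt_deform (n : ℕ) (ε x : ℝ) :
    HasDerivAt (deform n ε) (1 + ε * deformSlope n x x) x := by
  refine ((hasDerivAt_id x).fun_add (((hasDerivAt_pow (n + 1) x).fun_mul
    ((hasDerivAt_id x).const_sub 1)).const_mul ε)).congr_deriv ?_
  rw [deformSlope_self, id_eq, Nat.add_sub_cancel]
  push_cast
  ring

/-- The Jacobian and all factors by which the deformation scales the Jacobi density have the form
`1 + ε * u` with `|u| ≤ n + 2`. -/
theorem one_add_mul_pos {u : ℝ} (hε : |ε| < 1 / (n + 2)) (hu : |u| ≤ n + 2) :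
    0 < 1 + ε * u := by
  rw [lt_div_iff₀ (by positivity)] at hε
  have hεu : |ε * u| < 1 :=
    (abs_mul ε u).trans_lt ((mul_le_mul_of_nonneg_left hu (abs_nonneg ε)).trans_lt hε)
  linarith [(abs_lt.mp hεu).1]

theorem strictMonoOn_deform (hε : |ε| < 1 / (n + 2)) :
    StrictMonoOn (deform n ε) (Set.Icc 0 1) := fun x hx y hy hxy => by
  have hpos := one_add_mul_pos hε (abs_deformSlope_le n hx hy)
  nlinarith [deform_sub_deform n ε x y]

theorem image_deform_Icc (hε : |ε| < 1 / (n + 2)) :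
    deform n ε '' Set.Icc 0 1 = Set.Icc 0 1 := by
  have h0 : deform n ε 0 = 0 := by simp [deform]
  have h1 : deform n ε 1 = 1 := by simp [deform]
  have hcont : ContinuousOn (deform n ε) (Set.Icc 0 1) := fun x _ =>
    (hasDerivAt_deform n ε x).continuousAt.continuousWithinAt
  refine Set.Subset.antisymm ?_ (by simpa [h0, h1] using intermediate_value_Icc zero_le_one hcont)
  have hmaps := (strictMonoOn_deform hε).monotoneOn.mapsTo_Icc
  rw [h0, h1] at hmaps
  exact hmaps.image_subset

variable {N : ℕ}

theorem deformPi_eq_add_smul (n : ℕ) (ε : ℝ) (x : Fin N → ℝ) :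
    deformPi n ε x = x + ε • deformField n x := rfl

theorem image_deformPi_unitCube (hε : |ε| < 1 / (n + 2)) :
    deformPi n ε '' unitCube N = unitCube N := by
  have h := Set.piMap_image_univ_pi (fun _ : Fin N => deform n ε) fun _ => Set.Icc 0 1
  rwa [image_deform_Icc hε] at h

theorem injOn_deformPi (hε : |ε| < 1 / (n + 2)) : Set.InjOn (deformPi n ε) (unitCube N) :=
  fun _ hx _ hy hxy => funext fun i => (strictMonoOn_deform hε).injOn
    (apply_mem_Icc_of_mem_unitCube hx i) (apply_mem_Icc_of_mem_unitCube hy i) (congrFun hxy i)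

theorem hasFDerivAt_deformPi (n : ℕ) (ε : ℝ) (x : Fin N → ℝ) :
    HasFDerivAt (deformPi n ε) (ContinuousLinearMap.pi fun i =>
      (ContinuousLinearMap.toSpanSingleton ℝ (1 + ε * deformSlope n (x i) (x i))).comp
        (ContinuousLinearMap.proj i)) x :=
  hasFDerivAt_pi.mpr fun i =>
    (hasDerivAt_deform n ε (x i)).hasFDerivAt.comp x (hasFDerivAt_apply i x)

end Deformation

/-! ### Loop equations -/

section LoopEquations

open Finset

/-- The factor by which the deformation `deformPi n ε` changes the Jacobi density, including the
Jacobian. -/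
noncomputable def deformRatio (θ α M : ℝ) {N : ℕ} (n : ℕ) (ε : ℝ) (x : Fin N → ℝ) : ℝ :=
  (∏ p ∈ univ.filter (fun p : Fin N × Fin N => p.1 < p.2),
      (1 + ε * deformSlope n (x p.1) (x p.2)) ^ (2 * θ)) *
    ∏ i : Fin N, ((1 + ε * (x i ^ n * (1 - x i))) ^ (θ * α - 1)
      * (1 + ε * -x i ^ (n + 1)) ^ (θ * (M - N) + θ - 1) * (1 + ε * deformSlope n (x i) (x i)))

/-- The logarithmic derivative of `deformRatio` at `ε = 0`. -/
noncomputable def deformLogDeriv (θ α M : ℝ) {N : ℕ} (n : ℕ) (x : Fin N → ℝ) : ℝ :=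
  (∑ p ∈ univ.filter (fun p : Fin N × Fin N => p.1 < p.2),
      2 * θ * deformSlope n (x p.1) (x p.2)) +
    ∑ i : Fin N, ((θ * α - 1) * (x i ^ n * (1 - x i))
      + (θ * (M - N) + θ - 1) * -x i ^ (n + 1) + deformSlope n (x i) (x i))

variable {θ α : ℝ} {N n : ℕ} {ε : ℝ}

theorem abs_pow_mul_one_sub_le (n : ℕ) {x : ℝ} (hx : x ∈ Set.Icc (0 : ℝ) 1) :
    |x ^ n * (1 - x)| ≤ n + 2 := by
  rw [abs_of_nonneg (mul_nonneg (pow_nonneg hx.1 n) (sub_nonneg.mpr hx.2))]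
  linarith [mul_le_one₀ (pow_le_one₀ (n := n) hx.1 hx.2) (sub_nonneg.mpr hx.2)
    (sub_le_self 1 hx.1), (Nat.cast_nonneg n : (0 : ℝ) ≤ n)]

theorem abs_neg_pow_succ_le (n : ℕ) {x : ℝ} (hx : x ∈ Set.Icc (0 : ℝ) 1) :
    |-x ^ (n + 1)| ≤ n + 2 := by
  rw [abs_neg, abs_of_nonneg (pow_nonneg hx.1 _)]
  linarith [pow_le_one₀ (n := n + 1) hx.1 hx.2, (Nat.cast_nonneg n : (0 : ℝ) ≤ n)]

theorem abs_det_mul_jacobiDensity_deformPi {M : ℕ} (hε : |ε| < 1 / (n + 2)) {x : Fin N → ℝ}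
    (hx : x ∈ unitCube N) :
    |∏ i, (1 + ε * deformSlope n (x i) (x i))| * jacobiDensity θ α M N (deformPi n ε x)
      = jacobiDensity θ α M N x * deformRatio θ α M n ε x := by
  have hmem := apply_mem_Icc_of_mem_unitCube hx
  have hslope (i j : Fin N) : 0 < 1 + ε * deformSlope n (x i) (x j) :=
    one_add_mul_pos hε (abs_deformSlope_le n (hmem i) (hmem j))
  have hdist (p : Fin N × Fin N) :
      |deformPi n ε x p.1 - deformPi n ε x p.2| ^ (2 * θ)
        = |x p.1 - x p.2| ^ (2 * θ) * (1 + ε * deformSlope n (x p.1) (x p.2)) ^ (2 * θ) := by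
    rw [deformPi, deformPi, deform_sub_deform, abs_mul, abs_of_pos (hslope _ _),
      Real.mul_rpow (abs_nonneg _) (hslope _ _).le]
  have hleft (i : Fin N) (s : ℝ) :
      deformPi n ε x i ^ s = x i ^ s * (1 + ε * (x i ^ n * (1 - x i))) ^ s := by
    rw [← Real.mul_rpow (hmem i).1
      (one_add_mul_pos hε (abs_pow_mul_one_sub_le n (hmem i))).le, deformPi, deform]
    ring_nf
  have hright (i : Fin N) (s : ℝ) :
      (1 - deformPi n ε x i) ^ s = (1 - x i) ^ s * (1 + ε * -x i ^ (n + 1)) ^ s := by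
    rw [← Real.mul_rpow (sub_nonneg.mpr (hmem i).2)
      (one_add_mul_pos hε (abs_neg_pow_succ_le n (hmem i))).le, deformPi, deform]
    ring_nf
  rw [abs_of_pos (prod_pos fun i _ => hslope i i), jacobiDensity, jacobiDensity, deformRatio]
  simp only [hdist, hleft, hright, prod_mul_distrib]
  ring

theorem setIntegral_jacobiDensity_mul_deformRatio {M : ℕ} (hε : |ε| < 1 / (n + 2))
    (g : (Fin N → ℝ) → ℝ) :
    ∫ x in unitCube N, jacobiDensity θ α M N x * (deformRatio θ α M n ε x * g (deformPi n ε x))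
      = ∫ x in unitCube N, jacobiDensity θ α M N x * g x := by
  have hchange := integral_image_eq_integral_abs_det_fderiv_smul volume (measurableSet_unitCube N)
    (fun x _ => (hasFDerivAt_deformPi n ε x).hasFDerivWithinAt) (injOn_deformPi hε)
    (fun x => jacobiDensity θ α M N x * g x)
  rw [image_deformPi_unitCube hε] at hchange
  rw [hchange]
  refine setIntegral_congr_fun (measurableSet_unitCube N) fun x hx => ?_
  simp only [ContinuousLinearMap.det_pi, ContinuousLinearMap.det_toSpanSingleton, smul_eq_mul]
  rw [← mul_assoc, ← mul_assoc, abs_det_mul_jacobiDensity_deformPi hε hx]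

theorem deformRatio_zero (θ α M : ℝ) (n : ℕ) (x : Fin N → ℝ) : deformRatio θ α M n 0 x = 1 := by
  simp [deformRatio]

theorem hasDerivAt_one_add_mul_rpow (s c : ℝ) :
    HasDerivAt (fun ε : ℝ => (1 + ε * c) ^ s) (s * c) 0 := by
  have hlin : HasDerivAt (fun ε : ℝ => 1 + ε * c) c 0 := by
    simpa using ((hasDerivAt_id (0 : ℝ)).mul_const c).const_add 1
  refine (hlin.rpow_const (p := s) (by simp)).congr_deriv ?_
  rw [zero_mul, add_zero, Real.one_rpow, mul_one, mul_comm]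

theorem hasDerivAt_deformRatio (θ α M : ℝ) (n : ℕ) (x : Fin N → ℝ) :
    HasDerivAt (fun ε => deformRatio θ α M n ε x) (deformLogDeriv θ α M n x) 0 := by
  have hpairs := HasDerivAt.fun_finsetProd
    (u := univ.filter fun p : Fin N × Fin N => p.1 < p.2) fun p _ =>
      hasDerivAt_one_add_mul_rpow (2 * θ) (deformSlope n (x p.1) (x p.2))
  have hjac (i : Fin N) :=
    hasDerivAt_one_add_mul_rpow 1 (deformSlope n (x i) (x i))
  simp only [Real.rpow_one] at hjac
  have hpoints := HasDerivAt.fun_finsetProd (u := (univ : Finset (Fin N))) fun i _ =>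
    ((hasDerivAt_one_add_mul_rpow (θ * α - 1) (x i ^ n * (1 - x i))).fun_mul
      (hasDerivAt_one_add_mul_rpow (θ * (M - N) + θ - 1) (-x i ^ (n + 1)))).fun_mul (hjac i)
  refine (hpairs.fun_mul hpoints).congr_deriv ?_
  simp [deformLogDeriv]

theorem contDiffAt_deformRatio (θ α M : ℝ) (hε : |ε| < 1 / (n + 2)) {x : Fin N → ℝ}
    (hx : x ∈ unitCube N) :
    ContDiffAt ℝ 1 (fun z : ℝ × (Fin N → ℝ) => deformRatio θ α M n z.1 z.2) (ε, x) := by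
  have hmem := apply_mem_Icc_of_mem_unitCube hx
  have hslope (i j : Fin N) : ContDiffAt ℝ 1
      (fun z : ℝ × (Fin N → ℝ) => 1 + z.1 * deformSlope n (z.2 i) (z.2 j)) (ε, x) := by
    unfold deformSlope
    fun_prop
  refine ContDiffAt.mul (contDiffAt_prod fun p _ => ?_) (contDiffAt_prod fun i _ => ?_)
  · exact (hslope _ _).rpow_const_of_ne
      (one_add_mul_pos hε (abs_deformSlope_le n (hmem _) (hmem _))).ne'
  · refine ContDiffAt.mul (ContDiffAt.mul ?_ ?_) (hslope _ _)
    · exact ContDiffAt.rpow_const_of_ne (by fun_prop)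
        (one_add_mul_pos hε (abs_pow_mul_one_sub_le n (hmem i))).ne'
    · exact ContDiffAt.rpow_const_of_ne (by fun_prop)
        (one_add_mul_pos hε (abs_neg_pow_succ_le n (hmem i))).ne'

theorem hasDerivAt_deformRatio_mul_comp_deformPi (θ α M : ℝ) (n : ℕ) {g : (Fin N → ℝ) → ℝ}
    (x : Fin N → ℝ) (hg : DifferentiableAt ℝ g x) :
    HasDerivAt (fun ε => deformRatio θ α M n ε x * g (deformPi n ε x))
      (g x * deformLogDeriv θ α M n x + fderiv ℝ g x (deformField n x)) 0 := by
  have h0 : deformPi n 0 x = x := by rw [deformPi_eq_add_smul, zero_smul, add_zero]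
  have hcurve : HasDerivAt (fun ε : ℝ => deformPi n ε x) (deformField n x) 0 := by
    simpa [deformPi_eq_add_smul] using
      ((hasDerivAt_id (0 : ℝ)).smul_const (deformField n x)).const_add x
  have hcomp : HasDerivAt (fun ε : ℝ => g (deformPi n ε x)) (fderiv ℝ g x (deformField n x)) 0 :=
    hg.hasFDerivAt.comp_hasDerivAt_of_eq 0 hcurve h0.symm
  refine ((hasDerivAt_deformRatio θ α M n x).fun_mul hcomp).congr_deriv ?_
  rw [h0, deformRatio_zero]
  ring

/-- Differentiate in `ε` the invariance of `∫ g` under the change of variables `deformPi n ε`. -/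
theorem setIntegral_jacobiDensity_mul_deformLogDeriv {M : ℕ} (hθ : 0 < θ) (hα : 0 < α)
    (hM : N ≤ M) (n : ℕ) {g : (Fin N → ℝ) → ℝ} (hg : ContDiff ℝ 1 g) :
    ∫ x in unitCube N, jacobiDensity θ α M N x *
      (g x * deformLogDeriv θ α M n x + fderiv ℝ g x (deformField n x)) = 0 := by
  set δ : ℝ := 1 / (n + 2) / 2
  have hδ : 0 < δ := by positivity
  have hsmall (ε : ℝ) (hε : ε ∈ Set.Icc (-δ) δ) : |ε| < 1 / (n + 2) :=
    (abs_le.mpr hε).trans_lt (half_lt_self (by positivity))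
  have hdeform : ContDiff ℝ 1 fun z : ℝ × (Fin N → ℝ) => deformPi n z.1 z.2 := by
    unfold deformPi deform
    fun_prop
  have hderiv := hasDerivAt_integral_mul_of_contDiffAt (isCompact_unitCube N)
    (integrableOn_jacobiDensity hθ hα hM) hδ
    (fun ε hε x hx =>
      (contDiffAt_deformRatio θ α M (hsmall ε hε) hx).mul (hg.comp hdeform).contDiffAt)
    fun x _ => hasDerivAt_deformRatio_mul_comp_deformPi θ α M n x (hg.differentiable one_ne_zero x)
  refine hderiv.unique ((hasDerivAt_const (0 : ℝ)
    (∫ x in unitCube N, jacobiDensity θ α M N x * g x)).congr_of_eventuallyEq ?_)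
  filter_upwards [Icc_mem_nhds (neg_lt_zero.mpr hδ) hδ] with ε hε using
    setIntegral_jacobiDensity_mul_deformRatio (hsmall ε hε) g

/-- The power sum `𝔓_k` as a continuous function on `ℝ^N`. -/
def powerSum (N k : ℕ) : C(Fin N → ℝ, ℝ) := ⟨fun x => ∑ i, x i ^ k, by fun_prop⟩

theorem powerSum_apply (N k : ℕ) (x : Fin N → ℝ) : powerSum N k x = ∑ i, x i ^ k := rfl

/-- The coefficient of the power sum `𝔓_n` in `loopPoly`. -/
def loopShift (θ α : ℝ) (n : ℕ) : ℝ := θ * α + (1 - θ) * (n + 1) - 1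

/-- The coefficient of the highest power sum `𝔓_{n+1}` in the `n`-th loop equation. -/
def loopLead (θ α M : ℝ) (N n : ℕ) : ℝ := θ * (N + M) + loopShift θ α n

/-- The part of the `n`-th loop equation involving only the power sums `𝔓_0, …, 𝔓_n`. -/
noncomputable def loopPoly (θ α : ℝ) (N n : ℕ) : C(Fin N → ℝ, ℝ) :=
  θ • loopConv n (fun i j => powerSum N i * powerSum N j) + loopShift θ α n • powerSum N n

theorem two_mul_sum_filter_lt_add_sum_diag {ι R : Type*} [Fintype ι] [LinearOrder ι] [Semiring R]
    (f : ι → ι → R) (hf : ∀ i j, f i j = f j i) :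
    2 * ∑ p ∈ univ.filter (fun p : ι × ι => p.1 < p.2), f p.1 p.2 + ∑ i, f i i
      = ∑ i, ∑ j, f i j := by
  have hgt : ∑ p ∈ univ.filter (fun p : ι × ι => p.2 < p.1), f p.1 p.2
      = ∑ p ∈ univ.filter (fun p : ι × ι => p.1 < p.2), f p.1 p.2 :=
    sum_equiv (Equiv.prodComm ι ι) (by simp) fun p _ => hf p.1 p.2
  have hdiag : ∑ i, f i i = ∑ p : ι × ι, if p.1 = p.2 then f p.1 p.2 else 0 := by
    rw [Fintype.sum_prod_type]
    simp
  rw [two_mul, ← Fintype.sum_prod_type']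
  nth_rewrite 2 [← hgt]
  rw [hdiag, sum_filter, sum_filter, ← sum_add_distrib, ← sum_add_distrib]
  refine sum_congr rfl fun p _ => ?_
  rcases lt_trichotomy p.1 p.2 with h | h | h
  · simp [h, h.not_gt, h.ne]
  · simp [h]
  · simp [h, h.not_gt, h.ne']

theorem sum_deformSlope_eq (n : ℕ) (x : Fin N → ℝ) :
    ∑ i, ∑ j, deformSlope n (x i) (x j)
      = loopConv n (fun i j => powerSum N i * powerSum N j) x - 2 * N * powerSum N (n + 1) x := by
  have hantidiag (k : ℕ) : ∑ i, ∑ j, ∑ ij ∈ antidiagonal k, x i ^ ij.1 * x j ^ ij.2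
      = ∑ ij ∈ antidiagonal k, powerSum N ij.1 x * powerSum N ij.2 x := by
    simp only [powerSum_apply, sum_mul_sum]
    rw [sum_comm (s := antidiagonal k)]
    exact sum_congr rfl fun i _ => sum_comm
  have hzero : powerSum N 0 x = N := by simp [powerSum_apply]
  simp only [deformSlope, sum_sub_distrib, hantidiag,
    sum_antidiagonal_sub_sum_antidiagonal_succ n fun i j => powerSum N i x * powerSum N j x, hzero]
  simp only [loopConv, ContinuousMap.sub_apply, ContinuousMap.sum_apply, ContinuousMap.mul_apply]
  ring

theorem deformLogDeriv_eq (θ α M : ℝ) (n : ℕ) (x : Fin N → ℝ) :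
    deformLogDeriv θ α M n x
      = loopPoly θ α N n x - loopLead θ α M N n * powerSum N (n + 1) x := by
  have hpairs := two_mul_sum_filter_lt_add_sum_diag (fun i j => deformSlope n (x i) (x j))
    fun i j => deformSlope_comm n (x i) (x j)
  have hdiag : ∑ i, deformSlope n (x i) (x i)
      = (n + 1) * powerSum N n x - (n + 2) * powerSum N (n + 1) x := by
    simp only [deformSlope_self, sum_sub_distrib, ← mul_sum, powerSum_apply]
  have hleft : ∑ i, x i ^ n * (1 - x i) = powerSum N n x - powerSum N (n + 1) x := by
    simp only [powerSum_apply, mul_one_sub, sum_sub_distrib, pow_succ]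
  have hright : ∑ i, -x i ^ (n + 1) = -powerSum N (n + 1) x := by
    rw [powerSum_apply, sum_neg_distrib]
  rw [sum_deformSlope_eq, hdiag] at hpairs
  simp only [deformLogDeriv, sum_add_distrib, ← mul_sum, hdiag, hleft, hright, loopPoly, loopLead,
    loopShift, ContinuousMap.add_apply, ContinuousMap.smul_apply, smul_eq_mul]
  linear_combination θ * hpairs

/-- The functional `E` on observables of `N` particles is an expectation over the unit cube
satisfying the loop (Schwinger-Dyson) equations of the Jacobi ensemble. -/
structure SatisfiesLoopEquations (θ α M : ℝ) {N : ℕ} (E : C(Fin N → ℝ, ℝ) →ₗ[ℝ] ℝ) : Prop where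
  isExpectationOn : IsExpectationOn (unitCube N) E
  loop (n : ℕ) (g d : C(Fin N → ℝ, ℝ)) : ContDiff ℝ 1 g →
    (∀ x, d x = fderiv ℝ g x (deformField n x)) →
    E (g * loopPoly θ α N n) + E d = loopLead θ α M N n * E (g * powerSum N (n + 1))

theorem integral_jacobiEnsemble_loop_eq_zero {M : ℕ} (hθ : 0 < θ) (hα : 0 < α) (hM : N ≤ M)
    (n : ℕ) {g : (Fin N → ℝ) → ℝ} (hg : ContDiff ℝ 1 g) :
    ∫ y, (g y * (loopPoly θ α N n y - loopLead θ α M N n * powerSum N (n + 1) y)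
      + fderiv ℝ g y (deformField n y)) ∂jacobiEnsemble θ α M N = 0 := by
  simp only [← deformLogDeriv_eq]
  rw [integral_jacobiEnsemble, setIntegral_jacobiDensity_mul_deformLogDeriv hθ hα hM n hg,
    mul_zero]

theorem exists_satisfiesLoopEquations {M : ℕ} (hθ : 0 < θ) (hα : 0 < α) (hM : N ≤ M) :
    ∃ E : C(Fin N → ℝ, ℝ) →ₗ[ℝ] ℝ,
      (∀ f : C(Fin N → ℝ, ℝ), E f = ∫ y, f y ∂jacobiEnsemble θ α M N) ∧
      SatisfiesLoopEquations θ α M E := by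
  have := isProbabilityMeasure_jacobiEnsemble hθ hα hM
  have hintegrable := integrable_jacobiEnsemble hθ hα hM
  let E : C(Fin N → ℝ, ℝ) →ₗ[ℝ] ℝ :=
    { toFun := fun f => ∫ y, f y ∂jacobiEnsemble θ α M N
      map_add' := fun f g => integral_add (hintegrable f) (hintegrable g)
      map_smul' := fun c f => integral_const_mul c f }
  have hE (f : C(Fin N → ℝ, ℝ)) : E f = ∫ y, f y ∂jacobiEnsemble θ α M N := rfl
  refine ⟨E, hE, ⟨by simp [hE], fun f hf => ?_⟩, fun n g d hg hd => ?_⟩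
  · exact integral_nonneg_of_ae (ae_mem_unitCube_jacobiEnsemble.mono hf)
  · rw [← sub_eq_zero, ← map_add, ← smul_eq_mul (loopLead _ _ _ _ _), ← map_smul,
      ← map_sub, hE, ← integral_jacobiEnsemble_loop_eq_zero hθ hα hM n hg]
    refine integral_congr_ae (.of_forall fun y => ?_)
    simp only [ContinuousMap.sub_apply, ContinuousMap.add_apply, ContinuousMap.mul_apply,
      ContinuousMap.smul_apply, smul_eq_mul, hd]
    ring

end LoopEquations

section LoopEquationMoments

variable {N n : ℕ} {θ α M : ℝ}

theorem powerSum_zero (N : ℕ) : powerSum N 0 = (N : ℝ) • 1 := by ext; simp [powerSum_apply]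

theorem contDiff_powerSum (N k : ℕ) : ContDiff ℝ 1 (powerSum N k) := by
  change ContDiff ℝ 1 fun x : Fin N → ℝ => ∑ i, x i ^ k
  fun_prop

theorem fderiv_powerSum_deformField (n k : ℕ) (x : Fin N → ℝ) :
    fderiv ℝ (powerSum N k) x (deformField n x)
      = k * (powerSum N (n + k) x - powerSum N (n + k + 1) x) := by
  have hderiv : HasFDerivAt (fun y : Fin N → ℝ => ∑ i, y i ^ k)
      (∑ i, (k * x i ^ (k - 1)) • ContinuousLinearMap.proj (R := ℝ) (φ := fun _ => ℝ) i) x :=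
    HasFDerivAt.fun_sum fun i _ => by simpa using (hasFDerivAt_apply (𝕜 := ℝ) i x).pow k
  change fderiv ℝ (fun y : Fin N → ℝ => ∑ i, y i ^ k) x _ = _
  rw [hderiv.fderiv]
  simp only [sum_apply, smul_apply,
    ContinuousLinearMap.proj_apply, smul_eq_mul, deformField, powerSum_apply,
    ← Finset.sum_sub_distrib, Finset.mul_sum]
  refine Finset.sum_congr rfl fun i _ => ?_
  rcases k with _ | k
  · simp
  · rw [Nat.add_sub_cancel]
    ring

theorem powerSum_mem_Icc (k : ℕ) {x : Fin N → ℝ} (hx : x ∈ unitCube N) :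
    powerSum N k x ∈ Set.Icc (0 : ℝ) N := by
  have hterm (i : Fin N) := apply_mem_Icc_of_mem_unitCube hx i
  rw [powerSum_apply]
  refine ⟨Finset.sum_nonneg fun i _ => pow_nonneg (hterm i).1 k, ?_⟩
  calc ∑ i, x i ^ k ≤ ∑ _i : Fin N, (1 : ℝ) :=
        Finset.sum_le_sum fun i _ => pow_le_one₀ (hterm i).1 (hterm i).2
    _ = N := by simp

theorem abs_powerSum_le (k : ℕ) {x : Fin N → ℝ} (hx : x ∈ unitCube N) : |powerSum N k x| ≤ N :=
  (abs_of_nonneg (powerSum_mem_Icc k hx).1).trans_le (powerSum_mem_Icc k hx).2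

theorem abs_powerSum_sub_powerSum_le (k l : ℕ) {x : Fin N → ℝ} (hx : x ∈ unitCube N) :
    |powerSum N k x - powerSum N l x| ≤ N :=
  have hk := powerSum_mem_Icc k hx
  have hl := powerSum_mem_Icc l hx
  abs_sub_le_of_nonneg_of_le hk.1 hk.2 hl.1 hl.2

theorem map_mul_loopPoly (E : C(Fin N → ℝ, ℝ) →ₗ[ℝ] ℝ) (g : C(Fin N → ℝ, ℝ)) (θ α : ℝ) (n : ℕ) :
    E (g * loopPoly θ α N n)
      = θ * loopConv n (fun i j => E (g * (powerSum N i * powerSum N j)))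
        + loopShift θ α n * E (g * powerSum N n) := by
  have hconv := map_loopConv (n := n) (E ∘ₗ LinearMap.mulLeft ℝ g).toAddMonoidHom
    fun i j => powerSum N i * powerSum N j
  simp only [LinearMap.toAddMonoidHom_coe, LinearMap.comp_apply, LinearMap.mulLeft_apply] at hconv
  rw [loopPoly, mul_add, mul_smul_comm, mul_smul_comm, map_add, map_smul, map_smul, hconv,
    smul_eq_mul, smul_eq_mul]

namespace SatisfiesLoopEquations

variable {E : C(Fin N → ℝ, ℝ) →ₗ[ℝ] ℝ}

theorem map_pow_mul_loopPoly (h : SatisfiesLoopEquations θ α M E) (n k r : ℕ) (e : ℝ) :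
    E ((powerSum N k - e • 1) ^ r * loopPoly θ α N n)
      + r * k * E ((powerSum N k - e • 1) ^ (r - 1)
          * (powerSum N (n + k) - powerSum N (n + k + 1)))
      = loopLead θ α M N n * E ((powerSum N k - e • 1) ^ r * powerSum N (n + 1)) := by
  set t := powerSum N k - e • 1
  have ht : ContDiff ℝ 1 t := (contDiff_powerSum N k).sub (contDiff_const (c := e * 1))
  rw [← h.loop n (t ^ r) ((r * k : ℝ) • (t ^ (r - 1)
    * (powerSum N (n + k) - powerSum N (n + k + 1)))) (ht.pow r) fun x => ?_, map_smul, smul_eq_mul]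
  have hderiv : fderiv ℝ t x = fderiv ℝ (powerSum N k) x := fderiv_sub_const (e * 1)
  have hpow := fderiv_pow r (ht.differentiable one_ne_zero x)
  rw [ContinuousMap.coe_pow, hpow, hderiv]
  simp only [ContinuousMap.smul_apply, ContinuousMap.mul_apply, ContinuousMap.pow_apply,
    ContinuousMap.sub_apply, smul_apply, fderiv_powerSum_deformField,
    smul_eq_mul, nsmul_eq_mul]
  ring

theorem map_loopPoly (h : SatisfiesLoopEquations θ α M E) (n : ℕ) :
    E (loopPoly θ α N n) = loopLead θ α M N n * E (powerSum N (n + 1)) := by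
  simpa using h.map_pow_mul_loopPoly n 0 0 0

theorem map_centered_mul_loopPoly (h : SatisfiesLoopEquations θ α M E) (n k : ℕ) :
    E (centered E (powerSum N k) * loopPoly θ α N n)
      + k * (E (powerSum N (n + k)) - E (powerSum N (n + k + 1)))
      = loopLead θ α M N n * covOf E (powerSum N k) (powerSum N (n + 1)) := by
  rw [← h.isExpectationOn.map_centered_mul, ← map_sub]
  simpa [centered] using h.map_pow_mul_loopPoly n k 1 (E (powerSum N k))

theorem map_centered_powerSum_pow_four (h : SatisfiesLoopEquations θ α M E) (n : ℕ) :
    loopLead θ α M N n * E (centered E (powerSum N (n + 1)) ^ 4)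
      = E (centered E (powerSum N (n + 1)) ^ 3 * centered E (loopPoly θ α N n))
        + E (centered E (powerSum N (n + 1)) ^ 2 * ((3 * (n + 1) : ℝ) •
          (powerSum N (n + (n + 1)) - powerSum N (n + (n + 1) + 1)))) := by
  have hloop := h.map_pow_mul_loopPoly n (n + 1) 3 (E (powerSum N (n + 1)))
  change E (centered E _ ^ 3 * _) + _ * E (centered E _ ^ 2 * _) = _ * E (centered E _ ^ 3 * _)
    at hloop
  set t := centered E (powerSum N (n + 1)) with ht
  have hfour : t ^ 4 = t ^ 3 * powerSum N (n + 1) - E (powerSum N (n + 1)) • t ^ 3 := by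
    rw [ht, centered]; ext x; simp; ring
  have hcenter : t ^ 3 * centered E (loopPoly θ α N n)
      = t ^ 3 * loopPoly θ α N n - E (loopPoly θ α N n) • t ^ 3 := by
    rw [centered]; ext x; simp; ring
  rw [hfour, hcenter, mul_smul_comm, map_sub, map_sub, map_smul, map_smul, map_smul, h.map_loopPoly]
  push_cast at hloop
  simp only [smul_eq_mul]
  linear_combination -hloop

theorem map_centered_powerSum_pow_four_le (h : SatisfiesLoopEquations θ α M E) (hθ : 0 < θ)
    (hN : 0 < N) (hlead : θ * N ≤ loopLead θ α M N n) :
    E (centered E (powerSum N (n + 1)) ^ 4)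
      ≤ 128 / (θ * N) ^ 4 * E (centered E (loopPoly θ α N n) ^ 4)
        + 2 * (3 * (n + 1) / θ) ^ 2 := by
  have : (0 : ℝ) < N := by exact_mod_cast hN
  refine (h.isExpectationOn.map_pow_four_le_of_mul_map_eq (b := 3 * (n + 1) * N)
    (h.map_centered_powerSum_pow_four n) (by positivity) hlead fun x hx => ?_).trans_eq
    (by field_simp)
  rw [ContinuousMap.smul_apply, smul_eq_mul, abs_mul, abs_of_pos (by positivity)]
  exact mul_le_mul_of_nonneg_left (abs_powerSum_sub_powerSum_le _ _ hx) (by positivity)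

end SatisfiesLoopEquations

end LoopEquationMoments

/-! ### Asymptotics of means and covariances -/

section Asymptotics

open Filter Asymptotics Topology

theorem tendsto_div_natCast_of_isBigO_one {u : ℕ → ℝ} (hu : u =O[atTop] fun _ => (1 : ℝ)) :
    Tendsto (fun N => u N / N) atTop (𝓝 0) := by
  simpa only [div_eq_inv_mul] using
    tendsto_inv_atTop_nhds_zero_nat.zero_mul_isBoundedUnder_le hu.isBoundedUnder_le

/-- A sequence of expectation functionals of growing dimension satisfying the loop equations of
Jacobi ensembles whose parameters obey `α N / N → a` and `M N / N → m`. -/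
structure IsLoopFamily (θ : ℝ) (α M : ℕ → ℝ) (E : ∀ N, C(Fin N → ℝ, ℝ) →ₗ[ℝ] ℝ) (a m : ℝ) :
    Prop where
  pos : 0 < θ
  nonneg_shape : 0 ≤ a
  pos_size : 0 < m
  eventually_loop : ∀ᶠ N in atTop, SatisfiesLoopEquations θ (α N) (M N) (E N)
  tendsto_shape : Tendsto (fun N => α N / N) atTop (𝓝 a)
  tendsto_size : Tendsto (fun N => M N / N) atTop (𝓝 m)

/-- The limit of the expectation of the `k`-th power sum divided by `N` (a junk value if there is
no limit). -/
noncomputable def limitMoment (E : ∀ N, C(Fin N → ℝ, ℝ) →ₗ[ℝ] ℝ) (k : ℕ) : ℝ :=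
  limUnder atTop fun N => E N (powerSum N k) / N

namespace IsLoopFamily

variable {θ a m : ℝ} {α M : ℕ → ℝ} {E : ∀ N, C(Fin N → ℝ, ℝ) →ₗ[ℝ] ℝ}

theorem eventually_isExpectationOn (H : IsLoopFamily θ α M E a m) :
    ∀ᶠ N in atTop, IsExpectationOn (unitCube N) (E N) :=
  H.eventually_loop.mono fun _ h => h.isExpectationOn

theorem tendsto_loopShift_div (H : IsLoopFamily θ α M E a m) (n : ℕ) :
    Tendsto (fun N => loopShift θ (α N) n / N) atTop (𝓝 (θ * a)) := by
  have h := (H.tendsto_shape.const_mul θ).add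
    (tendsto_const_div_atTop_nhds_zero_nat ((1 - θ) * (n + 1) - 1))
  rw [add_zero] at h
  refine h.congr fun N => ?_
  rw [loopShift]
  ring

theorem tendsto_loopLead_div (H : IsLoopFamily θ α M E a m) (n : ℕ) :
    Tendsto (fun N => loopLead θ (α N) (M N) N n / N) atTop (𝓝 (θ * (1 + a + m))) := by
  have h := ((tendsto_const_nhds (x := θ)).add (H.tendsto_size.const_mul θ)).add
    (H.tendsto_loopShift_div n)
  rw [show θ + θ * m + θ * a = θ * (1 + a + m) by ring] at h
  refine h.congr' ?_
  filter_upwards [eventually_gt_atTop 0] with N hN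
  rw [loopLead]
  field_simp

theorem lead_pos (H : IsLoopFamily θ α M E a m) : 0 < θ * (1 + a + m) :=
  mul_pos H.pos (by linarith [H.nonneg_shape, H.pos_size])

theorem eventually_mul_le_loopLead (H : IsLoopFamily θ α M E a m) (n : ℕ) :
    ∀ᶠ N : ℕ in atTop, θ * N ≤ loopLead θ (α N) (M N) N n := by
  have hlt : θ < θ * (1 + a + m) :=
    lt_mul_of_one_lt_right H.pos (by linarith [H.nonneg_shape, H.pos_size])
  filter_upwards [(H.tendsto_loopLead_div n).eventually_const_le hlt, eventually_gt_atTop 0]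
    with N h hN
  rwa [le_div_iff₀ (by exact_mod_cast hN)] at h

theorem fluctuatesAtScale_loopPoly (H : IsLoopFamily θ α M E a m) {n : ℕ}
    (hP : ∀ k ≤ n, FluctuatesAtScale E (fun N => powerSum N k) 0) :
    FluctuatesAtScale E (fun N => loopPoly θ (α N) N n) 1 := by
  have hE := H.eventually_isExpectationOn
  have hbound (k : ℕ) : ∀ᶠ N in atTop, ∀ x ∈ unitCube N, |powerSum N k x| ≤ N :=
    .of_forall fun _ _ => abs_powerSum_le k
  have hprod {i j : ℕ} (hi : i ≤ n) (hj : j ≤ n) :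
      FluctuatesAtScale E (fun N => powerSum N i * powerSum N j) 1 :=
    (hP i hi).mul hE (hP j hj) (hbound i) (hbound j)
  have hshift : (fun N => loopShift θ (α N) n) =O[atTop] fun N : ℕ => (N : ℝ) ^ 1 := by
    simp only [pow_one]
    refine isBigO_of_div_tendsto_nhds ?_ _ (H.tendsto_loopShift_div n)
    filter_upwards [eventually_gt_atTop 0] with N hN h
    exact absurd h (by exact_mod_cast hN.ne')
  refine (FluctuatesAtScale.const_smul θ (.sub hE (.sum hE _ fun ij hij => ?_)
    (.sum hE _ fun i hi => ?_))).add hE (.smul hshift (hP n le_rfl))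
  · exact hprod (Finset.HasAntidiagonal.antidiagonal.fst_le hij)
      (Finset.HasAntidiagonal.antidiagonal.snd_le hij)
  · exact hprod (Finset.mem_range.mp hi) (n.sub_le i)

theorem fluctuatesAtScale_powerSum_succ (H : IsLoopFamily θ α M E a m) {n : ℕ}
    (hT : FluctuatesAtScale E (fun N => loopPoly θ (α N) N n) 1) :
    FluctuatesAtScale E (fun N => powerSum N (n + 1)) 0 := by
  have hscale : (fun N : ℕ => 128 / (θ * N) ^ 4
      * E N (centered (E N) (loopPoly θ (α N) N n) ^ 4)) =O[atTop] fun _ => (1 : ℝ) := by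
    refine ((isBigO_refl (fun N : ℕ => 128 / (θ * N) ^ 4) atTop).mul hT).trans
      (.of_bound (128 / θ ^ 4) ?_)
    filter_upwards [eventually_gt_atTop 0] with N hN
    have hθ := H.pos
    rw [Real.norm_of_nonneg (by positivity), norm_one]
    exact le_of_eq (by field_simp)
  simp only [FluctuatesAtScale, pow_zero, one_pow]
  refine IsBigO.trans (.of_bound' ?_)
    (hscale.add (isBigO_const_one ℝ (2 * (3 * (n + 1) / θ) ^ 2) atTop))
  filter_upwards [H.eventually_loop, H.eventually_mul_le_loopLead n, eventually_gt_atTop 0]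
    with N h hlead hN
  rw [Real.norm_of_nonneg (h.isExpectationOn.pow_four_nonneg _)]
  exact (h.map_centered_powerSum_pow_four_le H.pos hN hlead).trans (le_abs_self _)

theorem fluctuatesAtScale_powerSum (H : IsLoopFamily θ α M E a m) (k : ℕ) :
    FluctuatesAtScale E (fun N => powerSum N k) 0 := by
  induction k using Nat.strong_induction_on with
  | _ k ih =>
    rcases k with _ | n
    · refine (isBigO_zero _ _).congr' ?_ .rfl
      filter_upwards [H.eventually_isExpectationOn] with N h
      simp [powerSum_zero, h.centered_smul_one]
    · exact H.fluctuatesAtScale_powerSum_succ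
        (H.fluctuatesAtScale_loopPoly fun j hj => ih j (Nat.lt_succ_of_le hj))

theorem tendsto_of_mul_eq (H : IsLoopFamily θ α M E a m) (n : ℕ) {u v : ℕ → ℝ} {c : ℝ}
    (huv : ∀ᶠ N in atTop, u N = loopLead θ (α N) (M N) N n * v N)
    (hu : Tendsto (fun N => u N / N) atTop (𝓝 c)) :
    Tendsto v atTop (𝓝 (c / (θ * (1 + a + m)))) := by
  refine (hu.div (H.tendsto_loopLead_div n) H.lead_pos.ne').congr' ?_
  filter_upwards [huv, H.eventually_mul_le_loopLead n, eventually_gt_atTop 0] with N h hlead hN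
  have hN' : (0 : ℝ) < N := by exact_mod_cast hN
  have hlead' : loopLead θ (α N) (M N) N n ≠ 0 := ((mul_pos H.pos hN').trans_le hlead).ne'
  rw [Pi.div_apply, h]
  field_simp

theorem isBigO_covOf (H : IsLoopFamily θ α M E a m) (i j : ℕ) :
    (fun N => covOf (E N) (powerSum N i) (powerSum N j)) =O[atTop] fun _ => (1 : ℝ) :=
  FluctuatesAtScale.isBigO_covOf H.eventually_isExpectationOn (H.fluctuatesAtScale_powerSum i)
    (H.fluctuatesAtScale_powerSum j)

theorem tendsto_map_mul_loopPoly_div (H : IsLoopFamily θ α M E a m) {n : ℕ}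
    {g : ∀ N, C(Fin N → ℝ, ℝ)} {ρ : ℕ → ℕ → ℝ} {σ : ℝ}
    (hρ : ∀ i ≤ n, ∀ j ≤ n,
      Tendsto (fun N => E N (g N * (powerSum N i * powerSum N j)) / N) atTop (𝓝 (ρ i j)))
    (hσ : Tendsto (fun N => E N (g N * powerSum N n)) atTop (𝓝 σ)) :
    Tendsto (fun N => E N (g N * loopPoly θ (α N) N n) / N) atTop
      (𝓝 (θ * (loopConv n ρ + a * σ))) := by
  rw [mul_add, ← mul_assoc]
  refine (((tendsto_loopConv hρ).const_mul θ).add ((H.tendsto_loopShift_div n).mul hσ)).congr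
    fun N => ?_
  simp only [div_eq_inv_mul _ (N : ℝ)]
  rw [loopConv_mul_left, map_mul_loopPoly]
  ring

theorem tendsto_map_powerSum_mul_div (H : IsLoopFamily θ α M E a m) {i j : ℕ} {x y : ℝ}
    (hi : Tendsto (fun N => E N (powerSum N i) / N) atTop (𝓝 x))
    (hj : Tendsto (fun N => E N (powerSum N j) / N) atTop (𝓝 y)) :
    Tendsto (fun N => E N (powerSum N i * powerSum N j) / N / N) atTop (𝓝 (x * y)) := by
  have hcov := (tendsto_div_natCast_of_isBigO_one (H.isBigO_covOf i j)).mul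
    tendsto_inv_atTop_nhds_zero_nat
  have hsum := (hi.mul hj).add hcov
  rw [mul_zero, add_zero] at hsum
  refine hsum.congr' ?_
  filter_upwards [H.eventually_isExpectationOn] with N h
  rw [h.map_mul]
  ring

theorem tendsto_map_powerSum_succ_div (H : IsLoopFamily θ α M E a m) {n : ℕ} {μ : ℕ → ℝ}
    (hμ : ∀ k ≤ n, Tendsto (fun N => E N (powerSum N k) / N) atTop (𝓝 (μ k))) :
    Tendsto (fun N => E N (powerSum N (n + 1)) / N) atTop
      (𝓝 ((loopConv n (fun i j => μ i * μ j) + a * μ n) / (1 + a + m))) := by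
  have hscale (N : ℕ) (f : C(Fin N → ℝ, ℝ)) : E N ((N : ℝ)⁻¹ • 1 * f) = E N f / N := by
    rw [smul_mul_assoc, one_mul, map_smul, smul_eq_mul, inv_mul_eq_div]
  have hpoly := H.tendsto_map_mul_loopPoly_div (g := fun N => (N : ℝ)⁻¹ • 1)
    (ρ := fun i j => μ i * μ j)
    (fun i hi j hj => by
      simpa only [hscale] using H.tendsto_map_powerSum_mul_div (hμ i hi) (hμ j hj))
    (by simpa only [hscale] using hμ n le_rfl)
  rw [← mul_div_mul_left _ _ H.pos.ne']
  refine H.tendsto_of_mul_eq n ?_ hpoly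
  filter_upwards [H.eventually_loop] with N h
  rw [hscale, h.map_loopPoly, mul_div_assoc]

theorem tendsto_map_powerSum_zero_div (H : IsLoopFamily θ α M E a m) :
    Tendsto (fun N => E N (powerSum N 0) / N) atTop (𝓝 1) := by
  refine tendsto_const_nhds.congr' ?_
  filter_upwards [H.eventually_isExpectationOn, eventually_gt_atTop 0] with N h hN
  rw [powerSum_zero, h.map_smul_one, div_self (by exact_mod_cast hN.ne')]

theorem tendsto_map_powerSum_div (H : IsLoopFamily θ α M E a m) (k : ℕ) :
    Tendsto (fun N => E N (powerSum N k) / N) atTop (𝓝 (limitMoment E k)) := by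
  induction k using Nat.strong_induction_on with
  | _ k ih =>
    rcases k with _ | n
    · exact tendsto_nhds_limUnder ⟨_, H.tendsto_map_powerSum_zero_div⟩
    · exact tendsto_nhds_limUnder
        ⟨_, H.tendsto_map_powerSum_succ_div fun k hk => ih k (Nat.lt_succ_of_le hk)⟩

theorem isLimitMoments_limitMoment (H : IsLoopFamily θ α M E a m) :
    IsLimitMoments a m (limitMoment E) where
  zero := tendsto_nhds_unique (H.tendsto_map_powerSum_div 0) H.tendsto_map_powerSum_zero_div
  succ n := by
    have hsucc := tendsto_nhds_unique (H.tendsto_map_powerSum_div (n + 1))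
      (H.tendsto_map_powerSum_succ_div fun k _ => H.tendsto_map_powerSum_div k)
    rwa [eq_div_iff (by linarith [H.nonneg_shape, H.pos_size]), mul_comm] at hsucc

theorem tendsto_map_centered_mul_powerSum_mul_div (H : IsLoopFamily θ α M E a m) {i j k : ℕ}
    {x y : ℝ}
    (hi : Tendsto (fun N => covOf (E N) (powerSum N k) (powerSum N i)) atTop (𝓝 x))
    (hj : Tendsto (fun N => covOf (E N) (powerSum N k) (powerSum N j)) atTop (𝓝 y)) :
    Tendsto (fun N => E N (centered (E N) (powerSum N k) * (powerSum N i * powerSum N j)) / N)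
      atTop (𝓝 (limitMoment E i * y + limitMoment E j * x)) := by
  have hthird := tendsto_div_natCast_of_isBigO_one
    (FluctuatesAtScale.isBigO_map_centered_mul_mul H.eventually_isExpectationOn
      (H.fluctuatesAtScale_powerSum k) (H.fluctuatesAtScale_powerSum i)
      (H.fluctuatesAtScale_powerSum j))
  have hsum := (((H.tendsto_map_powerSum_div i).mul hj).add
    ((H.tendsto_map_powerSum_div j).mul hi)).add hthird
  rw [add_zero] at hsum
  refine hsum.congr' ?_
  filter_upwards [H.eventually_isExpectationOn] with N h
  rw [h.map_centered_mul_mul (powerSum N k) (powerSum N i) (powerSum N j),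
    covOf_comm (powerSum N j) (powerSum N k), covOf_comm (powerSum N i) (powerSum N k)]
  ring

theorem tendsto_covOf_powerSum_succ (H : IsLoopFamily θ α M E a m) {k n : ℕ} {γ : ℕ → ℝ}
    (hγ : ∀ j ≤ n, Tendsto (fun N => covOf (E N) (powerSum N k) (powerSum N j)) atTop (𝓝 (γ j))) :
    Tendsto (fun N => covOf (E N) (powerSum N k) (powerSum N (n + 1))) atTop
      (𝓝 ((2 * loopConv n (fun i j => limitMoment E i * γ j) + a * γ n
        + θ⁻¹ * (k * (limitMoment E (n + k) - limitMoment E (n + k + 1)))) / (1 + a + m))) := by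
  have hpoly := H.tendsto_map_mul_loopPoly_div (g := fun N => centered (E N) (powerSum N k))
    (ρ := fun i j => limitMoment E i * γ j + limitMoment E j * γ i)
    (fun i hi j hj => H.tendsto_map_centered_mul_powerSum_mul_div (hγ i hi) (hγ j hj))
    ((hγ n le_rfl).congr' (H.eventually_isExpectationOn.mono
      fun N h => (h.map_centered_mul _ _).symm))
  rw [loopConv_add, loopConv_swap fun i j => limitMoment E i * γ j, ← two_mul] at hpoly
  have hsum := hpoly.add (((H.tendsto_map_powerSum_div (n + k)).sub
    (H.tendsto_map_powerSum_div (n + k + 1))).const_mul (k : ℝ))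
  rw [← mul_div_mul_left _ _ H.pos.ne', mul_add θ, mul_inv_cancel_left₀ H.pos.ne']
  refine H.tendsto_of_mul_eq n (H.eventually_loop.mono fun N h =>
    h.map_centered_mul_loopPoly n k) (hsum.congr fun N => ?_)
  ring

theorem tendsto_covOf_powerSum (H : IsLoopFamily θ α M E a m) (l n : ℕ) :
    Tendsto (fun N => covOf (E N) (powerSum N (l + 1)) (powerSum N n)) atTop
      (𝓝 (θ⁻¹ * limitCov a m n (l + 1))) := by
  induction n using Nat.strong_induction_on with
  | _ n ih =>
    rcases n with _ | n
    · rw [limitCov_zero_left, mul_zero]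
      refine tendsto_const_nhds.congr' ?_
      filter_upwards [H.eventually_isExpectationOn] with N h
      rw [covOf, powerSum_zero, h.centered_smul_one, mul_zero, map_zero]
    · have hlead : 1 + a + m ≠ 0 := by linarith [H.nonneg_shape, H.pos_size]
      have hrec := H.isLimitMoments_limitMoment.limitCov_succ H.nonneg_shape H.pos_size l n
      convert H.tendsto_covOf_powerSum_succ fun j hj => ih j (Nat.lt_succ_of_le hj) using 2
      simp only [mul_left_comm _ θ⁻¹]
      rw [loopConv_mul_left, eq_div_iff hlead]
      push_cast [← add_assoc]
      linear_combination θ⁻¹ * hrec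

end IsLoopFamily

end Asymptotics

/-- **Limiting covariance for a single β-Jacobi ensemble** (equal-times case of the paper's
Theorem 5.2): `Cov(𝔓_{k₁}(y), 𝔓_{k₂}(y))` converges to an explicit double contour
integral, proportional to `θ⁻¹`. -/
theorem jacobi_covariance_limit
    (θ : ℝ) (hθ : 0 < θ) (α : ℕ → ℝ) (M : ℕ → ℕ)
    (hα : ∀ N : ℕ, 1 ≤ N → 0 < α N) (hM : ∀ N : ℕ, 1 ≤ N → N ≤ M N)
    (αhat Mhat : ℝ) (hαhat : 0 ≤ αhat)
    (hαlim : Filter.Tendsto (fun N : ℕ => α N / (N : ℝ)) Filter.atTop (nhds αhat))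
    (hMlim : Filter.Tendsto (fun N : ℕ => (M N : ℝ) / (N : ℝ)) Filter.atTop (nhds Mhat))
    (k₁ k₂ : ℕ) (hk₁ : 0 < k₁) (hk₂ : 0 < k₂)
    (r₁ r₂ : ℝ) (hr₁ : 0 < r₁) (hr₁₂ : r₁ < r₂) (hr₂ : r₂ < 1 + αhat + Mhat) :
    Filter.Tendsto
      (fun N : ℕ =>
        (((∫ y, (∑ j : Fin N, (y j) ^ k₁) * (∑ j : Fin N, (y j) ^ k₂)
              ∂ jacobiEnsemble θ (α N) (M N) N)
          - (∫ y, ∑ j : Fin N, (y j) ^ k₁ ∂ jacobiEnsemble θ (α N) (M N) N)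
            * (∫ y, ∑ j : Fin N, (y j) ^ k₂ ∂ jacobiEnsemble θ (α N) (M N) N) : ℝ) : ℂ))
      Filter.atTop
      (nhds (((θ : ℂ))⁻¹ * ((2 * (Real.pi : ℂ) * Complex.I)⁻¹) ^ 2 *
        (∮ v₂ in C(-1, r₂), (∮ v₁ in C(-1, r₁),
          ((v₂ - v₁) ^ 2)⁻¹ *
            (v₁ / (v₁ + 1) * ((v₁ - (αhat : ℂ)) / (v₁ - αhat - Mhat))) ^ k₁ *
            (v₂ / (v₂ + 1) * ((v₂ - (αhat : ℂ)) / (v₂ - αhat - Mhat))) ^ k₂)))) := by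
  choose! E hE using fun N (hN : 1 ≤ N) =>
    exists_satisfiesLoopEquations hθ (hα N hN) (hM N hN)
  have hMhat : 1 ≤ Mhat := ge_of_tendsto hMlim <| by
    filter_upwards [Filter.eventually_ge_atTop 1] with N hN
    rw [one_le_div (by exact_mod_cast hN)]
    exact_mod_cast hM N hN
  have H : IsLoopFamily θ α (fun N => M N) E αhat Mhat :=
    { pos := hθ
      nonneg_shape := hαhat
      pos_size := zero_lt_one.trans_le hMhat
      eventually_loop := (Filter.eventually_ge_atTop 1).mono fun N hN => (hE N hN).2
      tendsto_shape := hαlim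
      tendsto_size := hMlim }
  obtain ⟨l, rfl⟩ := Nat.exists_eq_succ_of_ne_zero hk₂.ne'
  rw [circleIntegral_circleIntegral_eq_limitCov hr₁ hr₁₂ hr₂, mul_assoc, ← mul_assoc (_ ^ 2),
    ← mul_pow, inv_mul_cancel₀ Complex.two_pi_I_ne_zero, one_pow, one_mul, ← Complex.ofReal_inv,
    ← Complex.ofReal_mul]
  refine (H.tendsto_covOf_powerSum l k₁).ofReal.congr' ?_
  filter_upwards [Filter.eventually_ge_atTop 1] with N hN
  have hcov := (hE N hN).2.isExpectationOn.map_mul (powerSum N k₁) (powerSum N (l + 1))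
  rw [covOf_comm, eq_sub_of_add_eq' hcov.symm, (hE N hN).1, (hE N hN).1, (hE N hN).1]
  rfl
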